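/- For every cyclic finite-dimensional smooth T-module X there exists a unique TS-submodule M of C_b^∞(k^×) of finite length and degree one with S-coinvariants π_0(M) ≅ X as T-modules. -/

import Mathlib

noncomputable section

open scoped Classical

namespace PSW

/-! ### The affine group `λ.b : x ↦ λ·x + b` over a field `K`. -/

@[ext]
structure Aff (K : Type*) [Field K] where
  t : Kˣ
  s : K

namespace Aff

variable {K : Type*} [Field K]

instance : Mul (Aff K) := ⟨fun g h => ⟨g.t * h.t, g.s + (g.t : K) * h.s⟩⟩
instance : One (Aff K) := ⟨⟨1, 0⟩⟩
instance : Inv (Aff K) := ⟨fun g => ⟨g.t⁻¹, -(((g.t⁻¹ : Kˣ) : K) * g.s)⟩⟩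

@[simp] lemma mul_t (g h : Aff K) : (g * h).t = g.t * h.t := rfl
@[simp] lemma mul_s (g h : Aff K) : (g * h).s = g.s + (g.t : K) * h.s := rfl
@[simp] lemma one_t : (1 : Aff K).t = 1 := rfl
@[simp] lemma one_s : (1 : Aff K).s = 0 := rfl
@[simp] lemma inv_t (g : Aff K) : (g⁻¹).t = g.t⁻¹ := rfl
@[simp] lemma inv_s (g : Aff K) : (g⁻¹).s = -(((g.t⁻¹ : Kˣ) : K) * g.s) := rfl

instance : Group (Aff K) where
  mul_assoc a b c := by
    ext
    · simp [mul_assoc]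
    · simp only [mul_s, mul_t, Units.val_mul]; ring
  one_mul a := by ext <;> simp
  mul_one a := by ext <;> simp
  inv_mul_cancel a := by
    ext
    · simp
    · simp

/-- The element `x_λ` of the group `TS`. -/
def xT (u : Kˣ) : Aff K := ⟨u, 0⟩

/-- The element `s_b` of the group `TS`. -/
def sS (b : K) : Aff K := ⟨1, b⟩

@[simp] lemma xT_t (u : Kˣ) : (xT u : Aff K).t = u := rfl
@[simp] lemma xT_s (u : Kˣ) : (xT u : Aff K).s = 0 := rfl
@[simp] lemma sS_t (b : K) : (sS b : Aff K).t = 1 := rfl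
@[simp] lemma sS_s (b : K) : (sS b : Aff K).s = b := rfl

/-- `T ≅ k^×` as a subgroup of `TS`. -/
def xTHom : Kˣ →* Aff K where
  toFun := xT
  map_one' := rfl
  map_mul' u v := by ext <;> simp [xT]

@[simp] lemma xTHom_apply (u : Kˣ) : (xTHom u : Aff K) = xT u := rfl

lemma mul_sS (g : Aff K) (b : K) : g * sS b = sS ((g.t : K) * b) * g := by
  ext
  · simp
  · simp [add_comm]

lemma sS_mul (b : K) (g : Aff K) : sS b * g = g * sS (((g.t⁻¹ : Kˣ) : K) * b) := by
  ext
  · simp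
  · simp [Units.mul_inv_cancel_left, add_comm]

lemma aff_decomp (g : Aff K) : g = xT g.t * sS (((g.t⁻¹ : Kˣ) : K) * g.s) := by
  ext
  · simp
  · simp [Units.mul_inv_cancel_left]

instance [TopologicalSpace K] : TopologicalSpace (Aff K) :=
  TopologicalSpace.induced (fun g : Aff K => ((g.t, g.s) : Kˣ × K)) inferInstance

end Aff

/-! ### Generalities on representations of a monoid on complex vector spaces. -/

namespace GRep

variable {G : Type*} [Monoid G]

section MonoidModules

variable {V W : Type*} [AddCommMonoid V] [Module ℂ V] [AddCommMonoid W] [Module ℂ W]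

/-- A submodule invariant under the representation. -/
def Invariant (ρ : Representation ℂ G V) (U : Submodule ℂ V) : Prop :=
  ∀ (g : G) (v : V), v ∈ U → ρ g v ∈ U

/-- Equivariance of a linear map with respect to two representations. -/
def Equivariant (ρ : Representation ℂ G V) (σ : Representation ℂ G W) (f : V →ₗ[ℂ] W) : Prop :=
  ∀ (g : G) (v : V), f (ρ g v) = σ g (f v)

/-- Isomorphism of representations. -/
def Iso (ρ : Representation ℂ G V) (σ : Representation ℂ G W) : Prop :=
  ∃ e : V ≃ₗ[ℂ] W, ∀ (g : G) (v : V), e (ρ g v) = σ g (e v)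

/-- Irreducibility. -/
def Irred (ρ : Representation ℂ G V) : Prop :=
  Nontrivial V ∧ ∀ U : Submodule ℂ V, Invariant ρ U → U = ⊥ ∨ U = ⊤

/-- Subrepresentation on an invariant submodule. -/
def sub (ρ : Representation ℂ G V) {U : Submodule ℂ V} (hU : Invariant ρ U) :
    Representation ℂ G ↥U where
  toFun g := (ρ g).restrict fun v hv => hU g v hv
  map_one' := by
    apply LinearMap.ext; intro v; apply Subtype.ext
    simp [LinearMap.restrict_apply]
  map_mul' g h := by
    apply LinearMap.ext; intro v; apply Subtype.ext
    simp [LinearMap.restrict_apply]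

@[simp] lemma sub_apply (ρ : Representation ℂ G V) {U : Submodule ℂ V} (hU : Invariant ρ U)
    (g : G) (v : ↥U) : ((sub ρ hU g v : ↥U) : V) = ρ g (v : V) := rfl

lemma ker_invariant (ρ : Representation ℂ G V) (σ : Representation ℂ G W)
    (f : V →ₗ[ℂ] W) (hf : Equivariant ρ σ f) : Invariant ρ (LinearMap.ker f) := by
  intro g v hv
  rw [LinearMap.mem_ker] at hv ⊢
  rw [hf g v, hv, map_zero]

lemma range_invariant (ρ : Representation ℂ G V) (σ : Representation ℂ G W)
    (f : V →ₗ[ℂ] W) (hf : Equivariant ρ σ f) : Invariant σ (LinearMap.range f) := by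
  rintro g w ⟨v, rfl⟩
  exact ⟨ρ g v, hf g v⟩

lemma map_invariant (ρ : Representation ℂ G V) (σ : Representation ℂ G W)
    (f : V →ₗ[ℂ] W) (hf : Equivariant ρ σ f) (U : Submodule ℂ V) (hU : Invariant ρ U) :
    Invariant σ (U.map f) := by
  rintro g w ⟨v, hv, rfl⟩
  exact ⟨ρ g v, hU g v hv, hf g v⟩

end MonoidModules

section GroupModules

variable {V W : Type*} [AddCommGroup V] [Module ℂ V] [AddCommGroup W] [Module ℂ W]

/-- Quotient representation. -/
def quot (ρ : Representation ℂ G V) (U : Submodule ℂ V) (hU : Invariant ρ U) :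
    Representation ℂ G (V ⧸ U) where
  toFun g := U.mapQ U (ρ g) fun v hv => hU g v hv
  map_one' := by
    apply LinearMap.ext; intro x
    obtain ⟨v, rfl⟩ := Submodule.Quotient.mk_surjective U x
    simp [Submodule.mapQ_apply]
  map_mul' g h := by
    apply LinearMap.ext; intro x
    obtain ⟨v, rfl⟩ := Submodule.Quotient.mk_surjective U x
    simp [Submodule.mapQ_apply]

@[simp] lemma quot_apply (ρ : Representation ℂ G V) (U : Submodule ℂ V) (hU : Invariant ρ U)
    (g : G) (v : V) :
    quot ρ U hU g (Submodule.Quotient.mk v) = Submodule.Quotient.mk (ρ g v) := rfl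

/-- Subquotient representation on `B/A`. -/
def subquot (ρ : Representation ℂ G V) {A B : Submodule ℂ V}
    (hA : Invariant ρ A) (hB : Invariant ρ B) :
    Representation ℂ G (↥B ⧸ A.comap B.subtype) :=
  quot (sub ρ hB) (A.comap B.subtype) fun g v hv => hA g v.1 hv

lemma mkQ_equivariant (ρ : Representation ℂ G V) (U : Submodule ℂ V) (hU : Invariant ρ U) :
    Equivariant ρ (quot ρ U hU) U.mkQ := by
  intro g v
  show Submodule.Quotient.mk (ρ g v) = quot ρ U hU g (Submodule.Quotient.mk v)
  rw [quot_apply]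

end GroupModules

end GRep

/-! ### TS-modules: representations of the affine group. -/

/-- A `TS`-module structure on `V` is a representation of the group `TS ≅ Gl_a(1)`. -/
abbrev Rep (K : Type*) [Field K] (V : Type*) [AddCommGroup V] [Module ℂ V] :=
  Representation ℂ (Aff K) V

section RepDefs

open Aff

variable {K : Type*} [Field K]
variable {V W : Type*} [AddCommGroup V] [Module ℂ V] [AddCommGroup W] [Module ℂ W]

/-- Smoothness: every vector has open stabilizer. -/
def IsSmoothRep [TopologicalSpace K] (ρ : Rep K V) : Prop :=
  ∀ v : V, IsOpen {g : Aff K | ρ g v = v}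

/-- Smoothness of a `T`-module, i.e. of a representation of `T ≅ k^×`. -/
def TIsSmooth {X : Type*} [AddCommMonoid X] [Module ℂ X] [TopologicalSpace K]
    (τ : Representation ℂ Kˣ X) : Prop :=
  ∀ x : X, IsOpen {u : Kˣ | τ u x = x}

/-- Smooth character of `T ≅ k^×` (open kernel, equivalently locally constant). -/
def SmoothMulChar [TopologicalSpace K] (χ : Kˣ →* ℂˣ) : Prop :=
  IsOpen {u : Kˣ | χ u = 1}

/-- The space `V^S` of `S`-invariants. -/
def sInv (ρ : Rep K V) : Submodule ℂ V where
  carrier := {v | ∀ b : K, ρ (sS b) v = v}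
  zero_mem' := fun b => map_zero _
  add_mem' {a b} ha hb := fun c => by rw [map_add, ha c, hb c]
  smul_mem' c v hv := fun b => by rw [map_smul, hv b]

@[simp] lemma mem_sInv (ρ : Rep K V) (v : V) :
    v ∈ sInv ρ ↔ ∀ b : K, ρ (sS b) v = v := Iff.rfl

/-- The `χ`-eigenspace `X^{T,χ}` of a `T`-module. -/
def tEigenT {X : Type*} [AddCommMonoid X] [Module ℂ X]
    (τ : Representation ℂ Kˣ X) (χ : Kˣ →* ℂˣ) : Submodule ℂ X where
  carrier := {x | ∀ u : Kˣ, τ u x = (χ u : ℂ) • x}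
  zero_mem' := fun u => by simp
  add_mem' {a b} ha hb := fun u => by rw [map_add, ha u, hb u, smul_add]
  smul_mem' c x hx := fun u => by rw [map_smul, hx u]; exact smul_comm c ((χ u : ℂ)) x

@[simp] lemma mem_tEigenT {X : Type*} [AddCommMonoid X] [Module ℂ X]
    (τ : Representation ℂ Kˣ X) (χ : Kˣ →* ℂˣ) (x : X) :
    x ∈ tEigenT τ χ ↔ ∀ u : Kˣ, τ u x = (χ u : ℂ) • x := Iff.rfl

/-- The `χ`-eigenspace `V^{T,χ}` of a `TS`-module. -/
def tEigen (ρ : Rep K V) (χ : Kˣ →* ℂˣ) : Submodule ℂ V := tEigenT (ρ.comp xTHom) χ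

/-- The kernel of the projection to the `S`-coinvariants `V_S`. -/
def sCoinvKer (ρ : Rep K V) : Submodule ℂ V :=
  Submodule.span ℂ {w : V | ∃ (b : K) (v : V), w = ρ (sS b) v - v}

/-- The kernel of the projection to the twisted coinvariants `V_{S,ψ'}`. -/
def sTwistKer (ρ : Rep K V) (ψ' : AddChar K ℂ) : Submodule ℂ V :=
  Submodule.span ℂ {w : V | ∃ (b : K) (v : V), w = ρ (sS b) v - ψ' b • v}

/-- The kernel of the projection to the `χ`-coinvariants `X_{T,χ}` of a `T`-module. -/
def tTwistKerT {X : Type*} [AddCommGroup X] [Module ℂ X]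
    (τ : Representation ℂ Kˣ X) (χ : Kˣ →* ℂˣ) : Submodule ℂ X :=
  Submodule.span ℂ {w : X | ∃ (u : Kˣ) (x : X), w = τ u x - (χ u : ℂ) • x}

/-- The kernel of the projection to the `χ`-coinvariants `V_{T,χ}` of a `TS`-module. -/
def tTwistKer (ρ : Rep K V) (χ : Kˣ →* ℂˣ) : Submodule ℂ V := tTwistKerT (ρ.comp xTHom) χ

lemma sCoinvKer_invariant (ρ : Rep K V) : GRep.Invariant ρ (sCoinvKer ρ) := by
  intro g v hv
  have h : sCoinvKer ρ ≤ Submodule.comap (ρ g) (sCoinvKer ρ) := by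
    refine Submodule.span_le.2 ?_
    rintro w ⟨b, v', rfl⟩
    simp only [SetLike.mem_coe, Submodule.mem_comap, map_sub]
    have h1 : ρ g (ρ (sS b) v') = ρ (sS ((g.t : K) * b)) (ρ g v') := by
      rw [← Module.End.mul_apply, ← map_mul, mul_sS, map_mul, Module.End.mul_apply]
    rw [h1]
    exact Submodule.subset_span ⟨(g.t : K) * b, ρ g v', rfl⟩
  exact h hv

lemma sInv_invariant (ρ : Rep K V) : GRep.Invariant ρ (sInv ρ) := by
  intro g v hv
  rw [mem_sInv] at hv ⊢
  intro b
  have h1 : ρ (sS b) (ρ g v) = ρ g (ρ (sS (((g.t⁻¹ : Kˣ) : K) * b)) v) := by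
    rw [← Module.End.mul_apply, ← map_mul, sS_mul, map_mul, Module.End.mul_apply]
  rw [h1, hv _]

/-- The `S`-coinvariants `π₀(V) = V_S` as a `TS`-module (`S` acting trivially). -/
def piZeroRep (ρ : Rep K V) : Rep K (V ⧸ sCoinvKer ρ) :=
  GRep.quot ρ (sCoinvKer ρ) (sCoinvKer_invariant ρ)

/-- The `S`-coinvariants `π₀(V) = V_S` as a `T`-module. -/
def piZeroT (ρ : Rep K V) : Representation ℂ Kˣ (V ⧸ sCoinvKer ρ) :=
  (piZeroRep ρ).comp xTHom

/-- The `T`-module structure on `κ(V) = V^S`. -/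
def sInvT (ρ : Rep K V) : Representation ℂ Kˣ ↥(sInv ρ) :=
  (GRep.sub ρ (sInv_invariant ρ)).comp xTHom

/-- A `TS`-module is perfect if all its eigenspaces `V^{T,χ}` for smooth `χ` vanish. -/
def Perfect [TopologicalSpace K] (ρ : Rep K V) : Prop :=
  ∀ χ : Kˣ →* ℂˣ, SmoothMulChar χ → tEigen ρ χ = ⊥

/-- A finite-dimensional `T`-module is cyclic if each generalized eigenspace is a single
Jordan block; equivalently all eigenspaces `X^{T,χ}` have dimension at most one. -/
def TCyclic {X : Type*} [AddCommGroup X] [Module ℂ X]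
    (τ : Representation ℂ Kˣ X) : Prop :=
  ∀ χ : Kˣ →* ℂˣ, Module.finrank ℂ ↥(tEigenT τ χ) ≤ 1

lemma sCoinvKer_le_comap (ρ : Rep K V) (σ : Rep K W)
    (f : V →ₗ[ℂ] W) (hf : GRep.Equivariant ρ σ f) :
    sCoinvKer ρ ≤ (sCoinvKer σ).comap f := by
  refine Submodule.span_le.2 ?_
  rintro w ⟨b, v, rfl⟩
  simp only [SetLike.mem_coe, Submodule.mem_comap, map_sub]
  rw [hf]
  exact Submodule.subset_span ⟨b, f v, rfl⟩

/-- The map induced by an equivariant map on the `S`-coinvariants `π₀`. -/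
def piZeroMap (ρ : Rep K V) (σ : Rep K W) (f : V →ₗ[ℂ] W) (hf : GRep.Equivariant ρ σ f) :
    (V ⧸ sCoinvKer ρ) →ₗ[ℂ] (W ⧸ sCoinvKer σ) :=
  Submodule.mapQ _ _ f (sCoinvKer_le_comap ρ σ f hf)

lemma piZeroMap_equivariant (ρ : Rep K V) (σ : Rep K W) (f : V →ₗ[ℂ] W)
    (hf : GRep.Equivariant ρ σ f) :
    GRep.Equivariant (piZeroRep ρ) (piZeroRep σ) (piZeroMap ρ σ f hf) := by
  intro g x
  obtain ⟨v, rfl⟩ := Submodule.Quotient.mk_surjective _ x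
  show piZeroMap ρ σ f hf (piZeroRep ρ g (Submodule.Quotient.mk v))
      = piZeroRep σ g (piZeroMap ρ σ f hf (Submodule.Quotient.mk v))
  rw [show piZeroRep ρ g (Submodule.Quotient.mk v) = Submodule.Quotient.mk (ρ g v) from rfl]
  rw [show piZeroMap ρ σ f hf (Submodule.Quotient.mk v) = Submodule.Quotient.mk (f v) from rfl]
  rw [show piZeroMap ρ σ f hf (Submodule.Quotient.mk (ρ g v))
      = Submodule.Quotient.mk (f (ρ g v)) from rfl]
  rw [show piZeroRep σ g (Submodule.Quotient.mk (f v)) = Submodule.Quotient.mk (σ g (f v)) from rfl]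
  rw [hf]

lemma kappaImg_invariant (ρ : Rep K V) :
    GRep.Invariant (piZeroT ρ) ((sInv ρ).map (sCoinvKer ρ).mkQ) := by
  rintro u w ⟨v, hv, rfl⟩
  refine ⟨ρ (xT u) v, sInv_invariant ρ (xT u) v hv, ?_⟩
  rfl

end RepDefs

/-! ### Composition series and degree. -/

/-- A composition series for a `TS`-module, witnessing finite length: a maximal chain of
invariant submodules (the subquotients are then irreducible). -/
structure CompSeries {K : Type*} [Field K] {V : Type*} [AddCommGroup V] [Module ℂ V]
    (ρ : Rep K V) where
  n : ℕ
  W : ℕ → Submodule ℂ V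
  bot : W 0 = ⊥
  top : W n = ⊤
  inv : ∀ i, GRep.Invariant ρ (W i)
  lt : ∀ i < n, W i < W (i + 1)
  maximal : ∀ i < n, ∀ C : Submodule ℂ V, GRep.Invariant ρ C → W i ≤ C → C ≤ W (i + 1) →
    C = W i ∨ C = W (i + 1)

/-- The number of Jordan–Hölder constituents of a composition series isomorphic to a given
representation `σ` (applied with `σ = 𝕊`, this is the degree). -/
def CompSeries.deg {K : Type*} [Field K] {V : Type*} [AddCommGroup V] [Module ℂ V]
    {ρ : Rep K V} (c : CompSeries ρ) {W₀ : Type*} [AddCommMonoid W₀] [Module ℂ W₀]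
    (σ : Representation ℂ (Aff K) W₀) : ℕ :=
  (Finset.univ.filter fun i : Fin c.n =>
    GRep.Iso (GRep.subquot ρ (c.inv i.1) (c.inv (i.1 + 1))) σ).card

/-! ### Fiber products of a `T`-module with a `TS`-module over a `T`-module. -/

section Fiber

open Aff

variable {K : Type*} [Field K]
variable {X Y E : Type*} [AddCommGroup X] [Module ℂ X] [AddCommGroup Y] [Module ℂ Y]
  [AddCommGroup E] [Module ℂ E]

/-- The product `TS`-module `X × E` where `S` acts trivially on the `T`-module `X`. -/
def prodRepTE (τ : Representation ℂ Kˣ X) (ρ : Rep K E) : Rep K (X × E) where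
  toFun g := (τ g.t).prodMap (ρ g)
  map_one' := by
    apply LinearMap.ext; rintro ⟨x, v⟩
    simp
  map_mul' g h := by
    apply LinearMap.ext; rintro ⟨x, v⟩
    simp [map_mul]

/-- The underlying space of the fiber product `𝔼[f] = X ×_Y E`. -/
def fiberKer (f : X →ₗ[ℂ] Y) (q : E →ₗ[ℂ] Y) : Submodule ℂ (X × E) :=
  LinearMap.ker (f.comp (LinearMap.fst ℂ X E) - q.comp (LinearMap.snd ℂ X E))

lemma mem_fiberKer (f : X →ₗ[ℂ] Y) (q : E →ₗ[ℂ] Y) (p : X × E) :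
    p ∈ fiberKer f q ↔ f p.1 = q p.2 := by
  simp [fiberKer, sub_eq_zero]

lemma fiber_invariant (τX : Representation ℂ Kˣ X) (ρE : Rep K E)
    (τY : Representation ℂ Kˣ Y) (f : X →ₗ[ℂ] Y) (q : E →ₗ[ℂ] Y)
    (hf : ∀ (u : Kˣ) (x : X), f (τX u x) = τY u (f x))
    (hq : sCoinvKer ρE ≤ LinearMap.ker q)
    (hqT : ∀ (u : Kˣ) (v : E), q (ρE (xT u) v) = τY u (q v)) :
    GRep.Invariant (prodRepTE τX ρE) (fiberKer f q) := by
  intro g p hp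
  rw [mem_fiberKer] at hp ⊢
  have hsb : q (ρE (sS (((g.t⁻¹ : Kˣ) : K) * g.s)) p.2) = q p.2 := by
    have h1 : ρE (sS (((g.t⁻¹ : Kˣ) : K) * g.s)) p.2 - p.2 ∈ sCoinvKer ρE :=
      Submodule.subset_span ⟨_, _, rfl⟩
    have h2 := hq h1
    rw [LinearMap.mem_ker, map_sub, sub_eq_zero] at h2
    exact h2
  have hdecomp : ρE g p.2 = ρE (xT g.t) (ρE (sS (((g.t⁻¹ : Kˣ) : K) * g.s)) p.2) := by
    conv_lhs => rw [aff_decomp g]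
    rw [map_mul, Module.End.mul_apply]
  have h1 : ((prodRepTE τX ρE) g p).1 = τX g.t p.1 := rfl
  have h2 : ((prodRepTE τX ρE) g p).2 = ρE g p.2 := rfl
  rw [h1, h2, hf, hp, hdecomp, hqT, hsb]

end Fiber

/-! ### Jordan blocks of finite-dimensional `T`-modules. -/

section Jordan

variable {K : Type*} [Field K]
variable {X : Type*} [AddCommGroup X] [Module ℂ X]

/-- A Jordan block of a `T`-module: a nonzero indecomposable invariant direct summand. -/
def IsJordanBlock (τ : Representation ℂ Kˣ X) (J : Submodule ℂ X) : Prop :=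
  J ≠ ⊥ ∧ GRep.Invariant τ J ∧ (∃ C : Submodule ℂ X, GRep.Invariant τ C ∧ IsCompl J C) ∧
    ∀ A B : Submodule ℂ X, GRep.Invariant τ A → GRep.Invariant τ B → A ≤ J → B ≤ J →
      A ⊓ B = ⊥ → A ⊔ B = J → A = ⊥ ∨ B = ⊥

end Jordan

/-! ### Invariants and coinvariants for a normal subgroup of an arbitrary group. -/

section Grp

variable {Γ : Type*} [Group Γ]
variable {V W : Type*} [AddCommGroup V] [Module ℂ V] [AddCommGroup W] [Module ℂ W]

/-- Invariants `V^N` under a subgroup `N`. -/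
def grpInv (ρ : Representation ℂ Γ V) (N : Subgroup Γ) : Submodule ℂ V where
  carrier := {v | ∀ n ∈ N, ρ n v = v}
  zero_mem' := fun n _ => map_zero _
  add_mem' {a b} ha hb := fun n hn => by rw [map_add, ha n hn, hb n hn]
  smul_mem' c v hv := fun n hn => by rw [map_smul, hv n hn]

@[simp] lemma mem_grpInv (ρ : Representation ℂ Γ V) (N : Subgroup Γ) (v : V) :
    v ∈ grpInv ρ N ↔ ∀ n ∈ N, ρ n v = v := Iff.rfl

/-- The kernel of the projection to the coinvariants `V_N` under a subgroup `N`. -/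
def grpCoinvKer (ρ : Representation ℂ Γ V) (N : Subgroup Γ) : Submodule ℂ V :=
  Submodule.span ℂ {w : V | ∃ n ∈ N, ∃ v : V, w = ρ n v - v}

lemma grpInv_invariant (ρ : Representation ℂ Γ V) (N : Subgroup Γ) [hN : N.Normal] :
    GRep.Invariant ρ (grpInv ρ N) := by
  intro γ v hv
  rw [mem_grpInv] at hv ⊢
  intro n hn
  have hmem : γ⁻¹ * n * γ ∈ N := by
    have := hN.conj_mem n hn γ⁻¹
    simpa using this
  have key : ρ n (ρ γ v) = ρ γ (ρ (γ⁻¹ * n * γ) v) := by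
    rw [← Module.End.mul_apply, ← map_mul, ← Module.End.mul_apply, ← map_mul]
    congr 1
    group
  rw [key, hv _ hmem]

lemma grpCoinvKer_invariant (ρ : Representation ℂ Γ V) (N : Subgroup Γ) [hN : N.Normal] :
    GRep.Invariant ρ (grpCoinvKer ρ N) := by
  intro γ v hv
  have h : grpCoinvKer ρ N ≤ Submodule.comap (ρ γ) (grpCoinvKer ρ N) := by
    refine Submodule.span_le.2 ?_
    rintro w ⟨n, hn, v', rfl⟩
    simp only [SetLike.mem_coe, Submodule.mem_comap, map_sub]
    have key : ρ γ (ρ n v') = ρ (γ * n * γ⁻¹) (ρ γ v') := by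
      rw [← Module.End.mul_apply, ← map_mul, ← Module.End.mul_apply, ← map_mul]
      congr 1
      group
    rw [key]
    exact Submodule.subset_span ⟨γ * n * γ⁻¹, hN.conj_mem n hn γ, ρ γ v', rfl⟩
  exact h hv

/-- The map induced on `N`-invariants by an equivariant map. -/
def grpInvRestrict (ρ : Representation ℂ Γ V) (σ : Representation ℂ Γ W) (N : Subgroup Γ)
    (f : V →ₗ[ℂ] W) (hf : GRep.Equivariant ρ σ f) : ↥(grpInv ρ N) →ₗ[ℂ] ↥(grpInv σ N) :=
  f.restrict (fun v hv => by
    rw [mem_grpInv] at hv ⊢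
    intro n hn
    rw [← hf n v, hv n hn])

lemma grpCoinvKer_le_comap (ρ : Representation ℂ Γ V) (σ : Representation ℂ Γ W) (N : Subgroup Γ)
    (f : V →ₗ[ℂ] W) (hf : GRep.Equivariant ρ σ f) :
    grpCoinvKer ρ N ≤ (grpCoinvKer σ N).comap f := by
  refine Submodule.span_le.2 ?_
  rintro w ⟨n, hn, v, rfl⟩
  simp only [SetLike.mem_coe, Submodule.mem_comap, map_sub]
  rw [hf]
  exact Submodule.subset_span ⟨n, hn, f v, rfl⟩

/-- The map induced on `N`-coinvariants by an equivariant map. -/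
def grpCoinvMap (ρ : Representation ℂ Γ V) (σ : Representation ℂ Γ W) (N : Subgroup Γ)
    (f : V →ₗ[ℂ] W) (hf : GRep.Equivariant ρ σ f) :
    (V ⧸ grpCoinvKer ρ N) →ₗ[ℂ] (W ⧸ grpCoinvKer σ N) :=
  Submodule.mapQ _ _ f (grpCoinvKer_le_comap ρ σ N f hf)

end Grp

/-! ### Tate L-factors of finite-dimensional `T`-modules. -/

section Lfactor

variable {K : Type*} [NontriviallyNormedField K]
variable {X : Type*} [AddCommGroup X] [Module ℂ X]

/-- The part of a `T`-module where the `χ`-twisted action is unramified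
(trivial on the norm-one units). -/
def unrPart (τ : Representation ℂ Kˣ X) (χ : Kˣ →* ℂˣ) : Submodule ℂ X where
  carrier := {x | ∀ u : Kˣ, ‖(u : K)‖ = 1 → (χ u : ℂ) • τ u x = x}
  zero_mem' := fun u _ => by simp
  add_mem' {a b} ha hb := fun u hu => by rw [map_add, smul_add, ha u hu, hb u hu]
  smul_mem' c x hx := fun u hu => by
    rw [map_smul, smul_comm, hx u hu]

lemma unrPart_stable (τ : Representation ℂ Kˣ X) (χ : Kˣ →* ℂˣ) (ϖ : Kˣ) :
    ∀ x ∈ unrPart τ χ, ((χ ϖ : ℂ) • τ ϖ) x ∈ unrPart τ χ := by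
  intro x hx u hu
  have comm : τ u (τ ϖ x) = τ ϖ (τ u x) := by
    rw [← Module.End.mul_apply, ← map_mul, mul_comm, map_mul, Module.End.mul_apply]
  calc (χ u : ℂ) • τ u (((χ ϖ : ℂ) • τ ϖ) x)
      = (χ ϖ : ℂ) • ((χ u : ℂ) • τ u (τ ϖ x)) := by
        rw [LinearMap.smul_apply, map_smul, smul_comm]
    _ = (χ ϖ : ℂ) • τ ϖ ((χ u : ℂ) • τ u x) := by rw [comm, map_smul]
    _ = ((χ ϖ : ℂ) • τ ϖ) x := by rw [hx u hu, LinearMap.smul_apply]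

/-- The twisted uniformizer action on the unramified part. -/
def twistOp (τ : Representation ℂ Kˣ X) (χ : Kˣ →* ℂˣ) (ϖ : Kˣ) :
    ↥(unrPart τ χ) →ₗ[ℂ] ↥(unrPart τ χ) :=
  LinearMap.restrict ((χ ϖ : ℂ) • τ ϖ) (unrPart_stable τ χ ϖ)

/-- The Tate `L`-factor `L(s, χ ⊗ X) = det(1 - q^{-s}·(χ·τ)(ϖ) | X^{unr,χ})⁻¹` of a
(finite-dimensional) `T`-module `X`, relative to a uniformizer `ϖ`. -/
def Lfactor (τ : Representation ℂ Kˣ X) (χ : Kˣ →* ℂˣ) (ϖ : Kˣ) (s : ℂ) : ℂ :=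
  (LinearMap.det (LinearMap.id - (‖(ϖ : K)‖ : ℂ) ^ s • twistOp τ χ ϖ))⁻¹

end Lfactor

/-! ### The concrete `TS`-modules `𝕊`, `C_c^∞(k)`, `C_b^∞(k^×)` and `𝔼[χ]`. -/

section Concrete

open Aff

variable (K : Type*) [NontriviallyNormedField K]

/-- The representation of `TS` on functions on `k^×`:
`(s_b g)(x) = ψ(bx) g(x)`, `(x_λ g)(x) = g(xλ)`. -/
def repCx (ψ : AddChar K ℂ) : Rep K (Kˣ → ℂ) where
  toFun g :=
    { toFun := fun f x => ψ (g.s * (x : K)) * f (x * g.t)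
      map_add' := fun f₁ f₂ => by funext x; simp [mul_add]
      map_smul' := fun c f => by
        funext x
        simp only [Pi.smul_apply, smul_eq_mul, RingHom.id_apply]
        ring }
  map_one' := by
    apply LinearMap.ext; intro f; funext x
    simp
  map_mul' g h := by
    apply LinearMap.ext; intro f; funext x
    show ψ ((g.s + (g.t : K) * h.s) * (x : K)) * f (x * (g.t * h.t))
        = ψ (g.s * (x : K)) * (ψ (h.s * ((x * g.t : Kˣ) : K)) * f (x * g.t * h.t))
    have harg : (g.s + (g.t : K) * h.s) * (x : K)
        = g.s * (x : K) + h.s * ((x * g.t : Kˣ) : K) := by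
      push_cast
      ring
    rw [harg, AddChar.map_add_eq_mul, ← mul_assoc x g.t h.t]
    ring

@[simp] lemma repCx_apply (ψ : AddChar K ℂ) (g : Aff K) (f : Kˣ → ℂ) (x : Kˣ) :
    repCx K ψ g f x = ψ (g.s * (x : K)) * f (x * g.t) := rfl

/-- The `χ`-twisted representation of `TS` on functions on `k`:
`(s_b g)(x) = ψ(bx) g(x)`, `(x_λ g)(x) = χ(λ) g(xλ)`.  (Take `χ = 1` for the
untwisted action on `C_c^∞(k)`; the module `𝔼[χ]` is `C_c^∞(k)` with the twisted action.) -/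
def repCc (ψ : AddChar K ℂ) (χ : Kˣ →* ℂˣ) : Rep K (K → ℂ) where
  toFun g :=
    { toFun := fun f x => (χ g.t : ℂ) * ψ (g.s * x) * f (x * (g.t : K))
      map_add' := fun f₁ f₂ => by funext x; simp [mul_add]
      map_smul' := fun c f => by
        funext x
        simp only [Pi.smul_apply, smul_eq_mul, RingHom.id_apply]
        ring }
  map_one' := by
    apply LinearMap.ext; intro f; funext x
    simp
  map_mul' g h := by
    apply LinearMap.ext; intro f; funext x
    show (χ (g.t * h.t) : ℂ) * ψ ((g.s + (g.t : K) * h.s) * x) * f (x * ((g.t * h.t : Kˣ) : K))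
        = (χ g.t : ℂ) * ψ (g.s * x) * ((χ h.t : ℂ) * ψ (h.s * (x * (g.t : K)))
            * f (x * (g.t : K) * (h.t : K)))
    have harg : (g.s + (g.t : K) * h.s) * x = g.s * x + h.s * (x * (g.t : K)) := by ring
    have harg2 : x * ((g.t * h.t : Kˣ) : K) = x * (g.t : K) * (h.t : K) := by
      push_cast
      ring
    rw [harg, harg2, AddChar.map_add_eq_mul, map_mul]
    push_cast
    ring

@[simp] lemma repCc_apply (ψ : AddChar K ℂ) (χ : Kˣ →* ℂˣ) (g : Aff K) (f : K → ℂ) (x : K) :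
    repCc K ψ χ g f x = (χ g.t : ℂ) * ψ (g.s * x) * f (x * (g.t : K)) := rfl

/-- The one-dimensional `TS`-module `ℂ_χ` on which `S` acts trivially and `x_λ` by `χ(λ)`. -/
def chiRep (χ : Kˣ →* ℂˣ) : Rep K ℂ where
  toFun g := (χ g.t : ℂ) • LinearMap.id
  map_one' := by
    apply LinearMap.ext; intro c
    simp
  map_mul' g h := by
    apply LinearMap.ext; intro c
    simp only [mul_t, map_mul, LinearMap.smul_apply, LinearMap.id_apply, Module.End.mul_apply,
      Units.val_mul, smul_eq_mul]
    ring

/-- `C_c^∞(k)`: locally constant, compactly supported functions on `k`. -/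
def CcK : Submodule ℂ (K → ℂ) where
  carrier := {f | IsLocallyConstant f ∧ HasCompactSupport f}
  zero_mem' := ⟨IsLocallyConstant.const 0, by
    rw [hasCompactSupport_def]
    simp⟩
  add_mem' {a b} ha hb := ⟨ha.1.comp₂ hb.1 (· + ·), ha.2.add hb.2⟩
  smul_mem' c f hf := by
    refine ⟨?_, hf.2.mono (Function.support_const_smul_subset c f)⟩
    exact hf.1.comp (fun z => c * z)

@[simp] lemma mem_CcK (f : K → ℂ) :
    f ∈ CcK K ↔ IsLocallyConstant f ∧ HasCompactSupport f := Iff.rfl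

/-- `𝕊 = C_c^∞(k^×)`: locally constant, compactly supported functions on `k^×`. -/
def SSx : Submodule ℂ (Kˣ → ℂ) where
  carrier := {f | IsLocallyConstant f ∧ HasCompactSupport f}
  zero_mem' := ⟨IsLocallyConstant.const 0, by
    rw [hasCompactSupport_def]
    simp⟩
  add_mem' {a b} ha hb := ⟨ha.1.comp₂ hb.1 (· + ·), ha.2.add hb.2⟩
  smul_mem' c f hf := by
    refine ⟨?_, hf.2.mono (Function.support_const_smul_subset c f)⟩
    exact hf.1.comp (fun z => c * z)

@[simp] lemma mem_SSx (f : Kˣ → ℂ) :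
    f ∈ SSx K ↔ IsLocallyConstant f ∧ HasCompactSupport f := Iff.rfl

/-- `C_b^∞(k^×)`: locally constant functions on `k^×` whose support has compact closure
in `k`. -/
def Cb : Submodule ℂ (Kˣ → ℂ) where
  carrier := {f | IsLocallyConstant f ∧
    IsCompact (closure (((↑) : Kˣ → K) '' Function.support f))}
  zero_mem' := ⟨IsLocallyConstant.const 0, by simp⟩
  add_mem' {a b} ha hb := by
    refine ⟨ha.1.comp₂ hb.1 (· + ·), ?_⟩
    refine IsCompact.of_isClosed_subset (ha.2.union hb.2) isClosed_closure ?_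
    refine closure_minimal ?_ (ha.2.isClosed.union hb.2.isClosed)
    refine (Set.image_mono (Function.support_add _ _)).trans ?_
    rw [Set.image_union]
    exact Set.union_subset_union subset_closure subset_closure
  smul_mem' c f hf := by
    refine ⟨hf.1.comp (fun z => c * z), ?_⟩
    refine IsCompact.of_isClosed_subset hf.2 isClosed_closure ?_
    refine closure_mono ?_
    exact Set.image_mono (Function.support_const_smul_subset c f)

@[simp] lemma mem_Cb (f : Kˣ → ℂ) :
    f ∈ Cb K ↔ IsLocallyConstant f ∧
      IsCompact (closure (((↑) : Kˣ → K) '' Function.support f)) := Iff.rfl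

variable {K}

lemma SSx_invariant (ψ : AddChar K ℂ) (hψlc : IsLocallyConstant (⇑ψ)) :
    GRep.Invariant (repCx K ψ) (SSx K) := by
  rintro g f hf
  rw [mem_SSx] at hf ⊢
  obtain ⟨hlc, hcs⟩ := hf
  have heq : repCx K ψ g f
      = (fun x : Kˣ => ψ (g.s * (x : K))) * (f ∘ (Homeomorph.mulRight g.t)) := rfl
  constructor
  · rw [heq]
    refine IsLocallyConstant.mul ?_ ?_
    · exact hψlc.comp_continuous (continuous_const.mul Units.continuous_val)
    · exact hlc.comp_continuous (Homeomorph.mulRight g.t).continuous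
  · rw [heq]
    exact (hcs.comp_homeomorph (Homeomorph.mulRight g.t)).mul_left

lemma CcK_invariant (ψ : AddChar K ℂ) (hψlc : IsLocallyConstant (⇑ψ)) (χ : Kˣ →* ℂˣ) :
    GRep.Invariant (repCc K ψ χ) (CcK K) := by
  rintro g f hf
  rw [mem_CcK] at hf ⊢
  obtain ⟨hlc, hcs⟩ := hf
  have hne : ((g.t : Kˣ) : K) ≠ 0 := g.t.ne_zero
  have heq : repCc K ψ χ g f
      = (fun x : K => (χ g.t : ℂ) * ψ (g.s * x)) * (f ∘ (Homeomorph.mulRight₀ (g.t : K) hne)) :=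
    rfl
  constructor
  · rw [heq]
    refine IsLocallyConstant.mul ?_ ?_
    · exact ((hψlc.comp_continuous (continuous_const.mul continuous_id)).comp
        (fun z => (χ g.t : ℂ) * z))
    · exact hlc.comp_continuous (Homeomorph.mulRight₀ (g.t : K) hne).continuous
  · rw [heq]
    exact (hcs.comp_homeomorph (Homeomorph.mulRight₀ (g.t : K) hne)).mul_left

/-- The `TS`-module `𝕊 = C_c^∞(k^×)`. -/
def SRep (ψ : AddChar K ℂ) (hψlc : IsLocallyConstant (⇑ψ)) : Rep K ↥(SSx K) :=
  GRep.sub (repCx K ψ) (SSx_invariant ψ hψlc)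

/-- The `TS`-module `𝔼[χ]`, i.e. `C_c^∞(k)` with the `χ`-twisted action. -/
def ERep (ψ : AddChar K ℂ) (hψlc : IsLocallyConstant (⇑ψ)) (χ : Kˣ →* ℂˣ) : Rep K ↥(CcK K) :=
  GRep.sub (repCc K ψ χ) (CcK_invariant ψ hψlc χ)

/-- The `TS`-module `𝕊^s`, a direct sum of `s` copies of `𝕊`. -/
def SRepPow (ψ : AddChar K ℂ) (hψlc : IsLocallyConstant (⇑ψ)) (s : ℕ) :
    Rep K (Fin s → ↥(SSx K)) where
  toFun g := LinearMap.pi fun i => (SRep ψ hψlc g).comp (LinearMap.proj i)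
  map_one' := by
    apply LinearMap.ext; intro v; funext i
    simp
  map_mul' g h := by
    apply LinearMap.ext; intro v; funext i
    simp [map_mul]

/-- The submodule `E` of `C_b^∞(k^×)` consisting of functions which are `χ`-eigenvectors
modulo `𝕊`; the quotient `E/𝕊` is the `χ`-eigenspace of `C_b^∞(k^×)/𝕊`. -/
def quotEigen (ψ : AddChar K ℂ) (χ : Kˣ →* ℂˣ) : Submodule ℂ (Kˣ → ℂ) where
  carrier := {f | f ∈ Cb K ∧ ∀ u : Kˣ, repCx K ψ (Aff.xT u) f - (χ u : ℂ) • f ∈ SSx K}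
  zero_mem' := ⟨(Cb K).zero_mem, fun u => by simpa using (SSx K).zero_mem⟩
  add_mem' {a b} ha hb := by
    refine ⟨(Cb K).add_mem ha.1 hb.1, fun u => ?_⟩
    rw [map_add, smul_add, add_sub_add_comm]
    exact (SSx K).add_mem (ha.2 u) (hb.2 u)
  smul_mem' c f hf := by
    refine ⟨(Cb K).smul_mem c hf.1, fun u => ?_⟩
    rw [map_smul, smul_comm, ← smul_sub]
    exact (SSx K).smul_mem c (hf.2 u)

/-- Evaluation at `0 ∈ k`, realizing the quotient map `𝔼[χ] → ℂ_χ` with kernel `𝕊`. -/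
def ev0 : ↥(CcK K) →ₗ[ℂ] ℂ where
  toFun f := (f : K → ℂ) 0
  map_add' f g := rfl
  map_smul' c f := rfl

end Concrete

/-! ### The diagonal torus in GL(2). -/

section GL2

variable {K : Type*} [Field K]

/-- The diagonal element `diag(a, b)` of `GL(2, K)`. -/
def diagGL (a b : Kˣ) : Matrix.GeneralLinearGroup (Fin 2) K where
  val := Matrix.diagonal ![(a : K), (b : K)]
  inv := Matrix.diagonal ![((a : K))⁻¹, ((b : K))⁻¹]
  val_inv := by
    ext i j
    fin_cases i <;> fin_cases j <;>
      simp [Matrix.mul_apply, Fin.sum_univ_two, Matrix.diagonal, Matrix.one_apply,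
        a.ne_zero, b.ne_zero]
  inv_val := by
    ext i j
    fin_cases i <;> fin_cases j <;>
      simp [Matrix.mul_apply, Fin.sum_univ_two, Matrix.diagonal, Matrix.one_apply,
        a.ne_zero, b.ne_zero]

end GL2


section Helpers1

set_option linter.unusedSectionVars false

open Aff Topology

variable {K : Type*} [NontriviallyNormedField K] [IsUltrametricDist K] [ProperSpace K]

lemma hp_compact_annulus (a R : ℝ) (ha : 0 < a) :
    IsCompact {x : Kˣ | a ≤ ‖(x : K)‖ ∧ ‖(x : K)‖ ≤ R} := by
  rw [(Units.isOpenEmbedding_val (R := K)).isInducing.isCompact_iff]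
  have : (Units.val '' {x : Kˣ | a ≤ ‖(x : K)‖ ∧ ‖(x : K)‖ ≤ R})
      = {x : K | a ≤ ‖x‖} ∩ Metric.closedBall 0 R := by
    ext x
    constructor
    · rintro ⟨y, hy, rfl⟩
      exact ⟨hy.1, by simpa using hy.2⟩
    · rintro ⟨h1, h2⟩
      have hx : x ≠ 0 := by
        rintro rfl
        simp at h1
        linarith
      exact ⟨Units.mk0 x hx, ⟨h1, by simpa using h2⟩, rfl⟩
  rw [this]
  exact (isCompact_closedBall _ _).inter_left (isClosed_le continuous_const continuous_norm)

lemma hp_mem_Cb (f : Kˣ → ℂ) :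
    f ∈ Cb K ↔ IsLocallyConstant f ∧ ∃ R : ℝ, ∀ x, f x ≠ 0 → ‖(x : K)‖ ≤ R := by
  rw [mem_Cb]
  refine and_congr_right fun _ => ?_
  constructor
  · intro h
    obtain ⟨R, hR⟩ := h.isBounded.subset_closedBall 0
    refine ⟨R, fun x hx => ?_⟩
    have := hR (subset_closure ⟨x, hx, rfl⟩)
    simpa using this
  · rintro ⟨R, hR⟩
    refine (isCompact_closedBall (0 : K) R).of_isClosed_subset isClosed_closure ?_
    refine closure_minimal ?_ Metric.isClosed_closedBall
    rintro _ ⟨x, hx, rfl⟩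
    simpa using hR x hx

lemma hp_mem_SSx (f : Kˣ → ℂ) :
    f ∈ SSx K ↔ IsLocallyConstant f ∧ (∃ R : ℝ, ∀ x, f x ≠ 0 → ‖(x : K)‖ ≤ R) ∧
      ∃ a : ℝ, 0 < a ∧ ∀ x, f x ≠ 0 → a ≤ ‖(x : K)‖ := by
  rw [mem_SSx]
  refine and_congr_right fun _ => ?_
  constructor
  · intro h
    have hc : IsCompact (tsupport f) := h
    constructor
    · obtain ⟨R, hR⟩ := (hc.image Units.continuous_val).isBounded.subset_closedBall 0
      refine ⟨R, fun x hx => ?_⟩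
      have := hR ⟨x, subset_tsupport f hx, rfl⟩
      simpa using this
    · obtain ⟨R, hR⟩ := (hc.image (Units.continuous_val.comp continuous_inv)).isBounded.subset_closedBall 0
      refine ⟨(max R 1)⁻¹, by positivity, fun x hx => ?_⟩
      have := hR ⟨x, subset_tsupport f hx, rfl⟩
      have h1 : ‖(x : K)‖⁻¹ ≤ R := by simpa using this
      have h2 : 0 < ‖(x : K)‖ := norm_pos_iff.2 x.ne_zero
      rw [inv_le_comm₀ (by positivity) h2]
      exact h1.trans (le_max_left _ _)
  · rintro ⟨⟨R, hR⟩, a, ha, h⟩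
    exact HasCompactSupport.of_support_subset_isCompact (hp_compact_annulus a R ha)
      fun x hx => ⟨h x hx, hR x hx⟩

lemma hp_SSx_le_Cb : SSx K ≤ Cb K := by
  intro f hf
  rw [hp_mem_SSx] at hf
  rw [hp_mem_Cb]
  exact ⟨hf.1, hf.2.1⟩

lemma hp_sub_mem_SSx {f g : Kˣ → ℂ} (hf : f ∈ Cb K) (hg : g ∈ Cb K) (a : ℝ) (ha : 0 < a)
    (h : ∀ x : Kˣ, ‖(x : K)‖ ≤ a → f x = g x) : f - g ∈ SSx K := by
  have h1 := (Cb K).sub_mem hf hg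
  rw [hp_mem_Cb] at h1
  rw [hp_mem_SSx]
  refine ⟨h1.1, h1.2, a, ha, fun x hx => ?_⟩
  by_contra hlt
  exact hx (by simp [h x (not_le.1 hlt).le])

lemma hp_SSx_vanish {f : Kˣ → ℂ} (hf : f ∈ SSx K) :
    ∃ a : ℝ, 0 < a ∧ ∀ x : Kˣ, ‖(x : K)‖ < a → f x = 0 := by
  rw [hp_mem_SSx] at hf
  obtain ⟨a, ha, h⟩ := hf.2.2
  refine ⟨a, ha, fun x hx => ?_⟩
  by_contra h0
  exact absurd (h x h0) (not_le.2 hx)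

lemma hp_psi_near (ψ : AddChar K ℂ) (hψlc : IsLocallyConstant (⇑ψ)) (b : K) :
    ∃ a : ℝ, 0 < a ∧ ∀ x : K, ‖x‖ ≤ a → ψ (b * x) = 1 := by
  have ho : IsOpen {x : K | ψ (b * x) = 1} :=
    (hψlc.comp_continuous (f := fun x : K => b * x) (by fun_prop)).isOpen_fiber 1
  obtain ⟨e, he, h⟩ := Metric.isOpen_iff.1 ho 0 (by simp)
  refine ⟨e / 2, by positivity, fun x hx => h ?_⟩
  simp only [Metric.mem_ball, dist_zero_right]
  linarith

lemma hp_Cb_sS (ψ : AddChar K ℂ) (hψlc : IsLocallyConstant (⇑ψ)) {f : Kˣ → ℂ} (hf : f ∈ Cb K)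
    (b : K) : repCx K ψ (sS b) f - f ∈ SSx K := by
  obtain ⟨a, ha, h⟩ := hp_psi_near ψ hψlc b
  rw [hp_mem_Cb] at hf
  obtain ⟨hlc, R, hR⟩ := hf
  rw [hp_mem_SSx]
  have e : ∀ x, (repCx K ψ (sS b) f - f) x = (ψ (b * x) - 1) * f x := by
    intro x
    simp [sub_mul]
  refine ⟨?_, ⟨R, fun x hx => hR x fun h0 => hx (by rw [e, h0, mul_zero])⟩, a, ha, fun x hx => ?_⟩
  · refine IsLocallyConstant.sub (IsLocallyConstant.mul ?_ ?_) hlc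
    · exact hψlc.comp_continuous (continuous_const.mul Units.continuous_val)
    · simpa using hlc
  · by_contra hlt
    exact hx (by rw [e, h x (not_le.1 hlt).le]; simp)

lemma hp_Cb_xT (ψ : AddChar K ℂ) {f : Kˣ → ℂ} (hf : f ∈ Cb K)
    (u : Kˣ) : repCx K ψ (xT u) f ∈ Cb K := by
  rw [hp_mem_Cb] at hf ⊢
  obtain ⟨hlc, R, hR⟩ := hf
  have e : ∀ x, repCx K ψ (xT u) f x = f (x * u) := by
    intro x
    simp
  constructor
  · rw [show repCx K ψ (xT u) f = f ∘ (Homeomorph.mulRight u) from funext e]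
    exact hlc.comp_continuous (Homeomorph.mulRight u).continuous
  · refine ⟨R / ‖(u : K)‖, fun x hx => ?_⟩
    rw [e] at hx
    have := hR _ hx
    rw [le_div_iff₀ (norm_pos_iff.2 u.ne_zero)]
    simpa using this

/-- `E` is good for `M` if multiplication by the indicator of `E` preserves `M`. -/
def hpGood (M : Submodule ℂ (Kˣ → ℂ)) (E : Set Kˣ) : Prop :=
  ∀ g ∈ M, E.indicator g ∈ M

lemma hpGood.inter {M : Submodule ℂ (Kˣ → ℂ)} {E F : Set Kˣ} (hE : hpGood M E)
    (hF : hpGood M F) : hpGood M (E ∩ F) := by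
  intro g hg
  rw [← Set.indicator_indicator]
  exact hE _ (hF _ hg)

lemma hpGood.union {M : Submodule ℂ (Kˣ → ℂ)} {E F : Set Kˣ} (hE : hpGood M E)
    (hF : hpGood M F) : hpGood M (E ∪ F) := by
  intro g hg
  have : (E ∪ F).indicator g = E.indicator g + F.indicator g - E.indicator (F.indicator g) := by
    funext x
    by_cases h1 : x ∈ E <;> by_cases h2 : x ∈ F <;> simp [Set.indicator, h1, h2]
  rw [this]
  exact M.sub_mem (M.add_mem (hE _ hg) (hF _ hg)) (hE _ (hF _ hg))

lemma hpGood_fiber (ψ : AddChar K ℂ) (hψlc : IsLocallyConstant (⇑ψ))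
    {M : Submodule ℂ (Kˣ → ℂ)} (hM : GRep.Invariant (repCx K ψ) M) (hMC : M ≤ Cb K)
    (b : K) (c : ℂ) : hpGood M {x : Kˣ | ψ (b * x) = c} := by
  intro g hg
  obtain ⟨-, R, hR⟩ := (hp_mem_Cb g).1 (hMC hg)
  have hfin : ((fun x : K => ψ (b * x)) '' Metric.closedBall 0 R).Finite := by
    have : CompactSpace (Metric.closedBall (0 : K) R) :=
      isCompact_iff_compactSpace.1 (isCompact_closedBall _ _)
    have := (hψlc.comp_continuous (f := fun x : Metric.closedBall (0 : K) R => b * (x : K))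
      (by fun_prop)).range_finite
    refine this.subset ?_
    rintro _ ⟨x, hx, rfl⟩
    exact ⟨⟨x, hx⟩, rfl⟩
  have key : ∀ F : Finset ℂ, c ∉ F →
      (fun x : Kˣ => (∏ d ∈ F, (ψ (b * x) - d) / (c - d)) * g x) ∈ M := by
    intro F
    induction F using Finset.induction_on with
    | empty => intro _; simpa using hg
    | insert d F hd ih =>
      intro hc
      have hcF : c ∉ F := fun h => hc (Finset.mem_insert_of_mem h)
      have h1 := ih hcF
      have h2 := M.smul_mem (c - d)⁻¹ (M.sub_mem (hM (sS b) _ h1) (M.smul_mem d h1))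
      convert h2 using 1
      funext x
      simp [Finset.prod_insert hd]
      ring
  convert key (hfin.toFinset.erase c) (by simp) using 1
  funext x
  by_cases hgx : g x = 0
  · simp [Set.indicator, hgx]
  by_cases hx : ψ (b * x) = c
  · rw [Set.indicator_of_mem (by exact hx), Finset.prod_eq_one, one_mul]
    intro d hd
    rw [hx, div_self]
    exact sub_ne_zero.2 (Finset.ne_of_mem_erase hd).symm
  · rw [Set.indicator_of_notMem (by exact hx), Finset.prod_eq_zero (i := ψ (b * x)), zero_mul]
    · rw [Finset.mem_erase]
      refine ⟨hx, ?_⟩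
      rw [Set.Finite.mem_toFinset]
      exact ⟨x, by simpa using hR x hgx, rfl⟩
    · simp

lemma hp_sep (ψ : AddChar K ℂ) (hψne : ψ ≠ 1) {x y : K} (h : x ≠ y) :
    ∃ b : K, ψ (b * x) ≠ ψ (b * y) := by
  obtain ⟨a, ha⟩ := AddChar.ne_one_iff.1 hψne
  refine ⟨a / (x - y), fun he => ha ?_⟩
  have hxy := sub_ne_zero.2 h
  have : a = a / (x - y) * x - a / (x - y) * y := by field_simp
  have h2 : a / (x - y) * x = a + a / (x - y) * y := by
    rw [eq_comm, ← eq_sub_iff_add_eq]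
    exact this
  rw [h2, AddChar.map_add_eq_mul] at he
  have hne : ψ (a / (x - y) * y) ≠ 0 := (ψ.val_isUnit _).ne_zero
  exact mul_right_cancel₀ hne (by rw [he, one_mul])

lemma hpGood_nhds (ψ : AddChar K ℂ) (hψlc : IsLocallyConstant (⇑ψ)) (hψne : ψ ≠ 1)
    {M : Submodule ℂ (Kˣ → ℂ)} (hM : GRep.Invariant (repCx K ψ) M) (hMC : M ≤ Cb K)
    (x₀ : Kˣ) (R : ℝ) (N : Set Kˣ) (hN : IsOpen N) (hx₀ : x₀ ∈ N) :
    ∃ E : Set Kˣ, hpGood M E ∧ E ∈ 𝓝 x₀ ∧ ∀ x ∈ E, ‖(x : K)‖ ≤ R → x ∈ N := by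
  have hNo : IsOpen (Units.val '' N : Set K) :=
    (Units.isOpenEmbedding_val (R := K)).isOpenMap _ hN
  have hC : IsCompact (Metric.closedBall (0 : K) R \ (Units.val '' N)) :=
    (isCompact_closedBall _ _).diff hNo
  have main : ∃ E : Set Kˣ, hpGood M E ∧ E ∈ 𝓝 x₀ ∧
      ∀ x ∈ E, (x : K) ∉ (Metric.closedBall (0 : K) R \ (Units.val '' N)) := by
    refine hC.induction_on (p := fun s => ∃ E : Set Kˣ, hpGood M E ∧ E ∈ 𝓝 x₀ ∧
      ∀ x ∈ E, (x : K) ∉ s) ?_ ?_ ?_ ?_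
    · exact ⟨Set.univ, fun g hg => by simpa using hg, Filter.univ_mem, by simp⟩
    · rintro s t hst ⟨E, h1, h2, h3⟩
      exact ⟨E, h1, h2, fun x hx hs => h3 x hx (hst hs)⟩
    · rintro s t ⟨E, h1, h2, h3⟩ ⟨F, h4, h5, h6⟩
      refine ⟨E ∩ F, h1.inter h4, Filter.inter_mem h2 h5, ?_⟩
      rintro x ⟨hxE, hxF⟩ (hs | ht)
      · exact h3 x hxE hs
      · exact h6 x hxF ht
    · rintro y ⟨-, hy⟩
      have hne : y ≠ x₀ := by
        rintro rfl
        exact hy ⟨x₀, hx₀, rfl⟩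
      obtain ⟨b, hb⟩ := hp_sep ψ hψne hne
      have hlc : IsLocallyConstant (fun x : K => ψ (b * x)) :=
        hψlc.comp_continuous (f := fun x : K => b * x) (by fun_prop)
      refine ⟨{x | ψ (b * x) = ψ (b * y)}, mem_nhdsWithin_of_mem_nhds
        ((hlc.isOpen_fiber _).mem_nhds rfl), {x : Kˣ | ψ (b * x) = ψ (b * x₀)},
        hpGood_fiber ψ hψlc hM hMC b _, ?_, ?_⟩
      · exact ((hlc.isOpen_fiber _).preimage Units.continuous_val).mem_nhds rfl
      · intro x hx hx'
        exact hb (hx'.symm.trans hx)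
  obtain ⟨E, h1, h2, h3⟩ := main
  refine ⟨E, h1, h2, fun x hx hR => ?_⟩
  by_contra hn
  refine h3 x hx ⟨by simpa using hR, ?_⟩
  rintro ⟨z, hz, hzx⟩
  rw [Units.ext hzx] at hz
  exact hn hz

lemma hp_SSx_le (ψ : AddChar K ℂ) (hψlc : IsLocallyConstant (⇑ψ)) (hψne : ψ ≠ 1)
    {M : Submodule ℂ (Kˣ → ℂ)} (hM : GRep.Invariant (repCx K ψ) M) (hMC : M ≤ Cb K)
    (hne : M ≠ ⊥) : SSx K ≤ M := by
  obtain ⟨g₀, hg₀, hg₀ne⟩ := M.ne_bot_iff.1 hne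
  obtain ⟨x₁, hx₁⟩ := Function.ne_iff.1 hg₀ne
  intro f hf
  have hfC := (hp_mem_Cb f).1 (hp_SSx_le_Cb hf)
  have hc : IsCompact (tsupport f) := hf.2
  have main : ∃ E : Set Kˣ, tsupport f ⊆ E ∧ hpGood M E ∧ E.indicator f ∈ M := by
    refine hc.induction_on (p := fun s => ∃ E : Set Kˣ, s ⊆ E ∧ hpGood M E ∧ E.indicator f ∈ M)
      ?_ ?_ ?_ ?_
    · refine ⟨∅, subset_rfl, fun g hg => ?_, ?_⟩
      · rw [Set.indicator_empty]; exact M.zero_mem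
      · rw [Set.indicator_empty]; exact M.zero_mem
    · rintro s t hst ⟨E, h1, h2⟩
      exact ⟨E, hst.trans h1, h2⟩
    · rintro s t ⟨E, h1, h2, h3⟩ ⟨F, h4, h5, h6⟩
      refine ⟨E ∪ F, Set.union_subset_union h1 h4, h2.union h5, ?_⟩
      have : (E ∪ F).indicator f = E.indicator f + F.indicator f - E.indicator (F.indicator f) := by
        funext x
        by_cases h1 : x ∈ E <;> by_cases h2 : x ∈ F <;> simp [Set.indicator, h1, h2]
      rw [this]
      exact M.sub_mem (M.add_mem h3 h6) (h2 _ h6)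
    · intro x₀ _
      set g := repCx K ψ (xT (x₀⁻¹ * x₁)) g₀ with hgdef
      have hg : g ∈ M := hM _ _ hg₀
      have hgx : g x₀ ≠ 0 := by
        simpa [hgdef] using hx₁
      have hgC := (hp_mem_Cb g).1 (hMC hg)
      obtain ⟨R₁, hR₁⟩ := hfC.2
      obtain ⟨R₂, hR₂⟩ := hgC.2
      obtain ⟨E, hE1, hE2, hE3⟩ := hpGood_nhds ψ hψlc hψne hM hMC x₀ (max R₁ R₂)
        ({x | f x = f x₀} ∩ {x | g x = g x₀})
        ((hfC.1.isOpen_fiber _).inter (hgC.1.isOpen_fiber _)) ⟨rfl, rfl⟩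
      refine ⟨E, mem_nhdsWithin_of_mem_nhds hE2, E, subset_rfl, hE1, ?_⟩
      have h := M.smul_mem (f x₀ / g x₀) (hE1 g hg)
      convert h using 1
      funext x
      by_cases hx : x ∈ E
      · simp only [Set.indicator_of_mem hx, Pi.smul_apply, smul_eq_mul]
        by_cases hn : ‖(x : K)‖ ≤ max R₁ R₂
        · obtain ⟨h1, h2⟩ := hE3 x hx hn
          simp only [Set.mem_ofPred_eq] at h1 h2
          rw [h1, h2]
          field_simp
        · have h1 : f x = 0 := by
            by_contra h0
            exact hn ((hR₁ x h0).trans (le_max_left _ _))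
          have h2 : g x = 0 := by
            by_contra h0
            exact hn ((hR₂ x h0).trans (le_max_right _ _))
          rw [h1, h2, mul_zero]
      · simp [Set.indicator_of_notMem hx]
  obtain ⟨E, h1, -, h3⟩ := main
  rwa [Set.indicator_eq_self.2 ((subset_tsupport f).trans h1)] at h3

/-- The kernel of the coinvariants of a nonzero submodule is `𝕊`. -/
lemma hp_coinv (ψ : AddChar K ℂ) (hψlc : IsLocallyConstant (⇑ψ)) (hψne : ψ ≠ 1)
    {M : Submodule ℂ (Kˣ → ℂ)} (hM : GRep.Invariant (repCx K ψ) M) (hMC : M ≤ Cb K)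
    (hne : M ≠ ⊥) :
    sCoinvKer (GRep.sub (repCx K ψ) hM) = (SSx K).comap M.subtype := by
  apply le_antisymm
  · refine Submodule.span_le.2 ?_
    rintro _ ⟨b, v, rfl⟩
    exact hp_Cb_sS ψ hψlc (hMC v.2) b
  · have hinv : GRep.Invariant (repCx K ψ)
        ((sCoinvKer (GRep.sub (repCx K ψ) hM)).map M.subtype) :=
      GRep.map_invariant (GRep.sub (repCx K ψ) hM) _ M.subtype (fun g v => rfl) _
        (sCoinvKer_invariant _)
    have hle : (sCoinvKer (GRep.sub (repCx K ψ) hM)).map M.subtype ≤ Cb K := by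
      rintro _ ⟨v, -, rfl⟩
      exact hMC v.2
    have hne' : (sCoinvKer (GRep.sub (repCx K ψ) hM)).map M.subtype ≠ ⊥ := by
      obtain ⟨g₀, hg₀, hg₀ne⟩ := M.ne_bot_iff.1 hne
      obtain ⟨x₁, hx₁⟩ := Function.ne_iff.1 hg₀ne
      obtain ⟨b, hb⟩ := hp_sep ψ hψne x₁.ne_zero
      rw [Submodule.ne_bot_iff]
      refine ⟨repCx K ψ (sS b) g₀ - g₀, ⟨_, Submodule.subset_span ⟨b, ⟨g₀, hg₀⟩, rfl⟩, rfl⟩, ?_⟩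
      refine Function.ne_iff.2 ⟨x₁, ?_⟩
      have : (repCx K ψ (sS b) g₀ - g₀) x₁ = (ψ (b * x₁) - 1) * g₀ x₁ := by simp [sub_mul]
      rw [this]
      refine mul_ne_zero (sub_ne_zero.2 ?_) hx₁
      simpa using hb
    intro v hv
    obtain ⟨w, hw, hwv⟩ := hp_SSx_le ψ hψlc hψne hinv hle hne' hv
    rwa [← Subtype.ext hwv]

lemma hp_SSx_ne_bot : SSx K ≠ ⊥ := by
  rw [Submodule.ne_bot_iff]
  obtain ⟨U, hU⟩ : ∃ U : Set Kˣ, U = {x : Kˣ | (x : K) ∈ Metric.ball (1 : K) 1} := ⟨_, rfl⟩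
  have hcl : IsClopen U := by
    rw [hU]
    exact (IsUltrametricDist.isClopen_ball (1 : K) 1).preimage Units.continuous_val
  refine ⟨U.indicator 1, ?_, ?_⟩
  · rw [hp_mem_SSx]
    have hn : ∀ x : Kˣ, U.indicator (1 : Kˣ → ℂ) x ≠ 0 → ‖(x : K)‖ = 1 := by
      intro x hx
      have hx1 : x ∈ U := by
        by_contra h
        exact hx (Set.indicator_of_notMem h _)
      rw [hU] at hx1
      have hx2 : ‖(x : K) - 1‖ < 1 := by simpa [dist_eq_norm] using hx1
      have h1 : ‖(1 : K)‖ = 1 := norm_one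
      have := IsUltrametricDist.norm_add_eq_max_of_norm_ne_norm (x := (x : K) - 1) (y := 1)
        (by rw [h1]; exact hx2.ne)
      rw [sub_add_cancel, h1, max_eq_right hx2.le] at this
      exact this
    exact ⟨(LocallyConstant.charFn ℂ hcl).isLocallyConstant, ⟨1, fun x hx => (hn x hx).le⟩,
      1, one_pos, fun x hx => (hn x hx).ge⟩
  · refine Function.ne_iff.2 ⟨1, ?_⟩
    rw [Set.indicator_of_mem (by simp [hU])]
    simp

end Helpers1


section Helpers2

set_option linter.unusedSectionVars false

variable {G : Type*} [CommGroup G] {X : Type*} [AddCommGroup X] [Module ℂ X] [Module.Finite ℂ X]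

/-- A functional not vanishing on any nonzero subrepresentation. -/
def hpSep (τ : Representation ℂ G X) (l : Module.Dual ℂ X) : Prop :=
  ∀ x, (∀ y, l (τ y x) = 0) → x = 0

lemma hpSep_span (τ : Representation ℂ G X) (l : Module.Dual ℂ X) (hl : hpSep τ l) :
    Submodule.span ℂ (Set.range fun g : G => l ∘ₗ τ g) = ⊤ := by
  rw [← Subspace.dualCoannihilator_dualAnnihilator_eq
    (W := Submodule.span ℂ (Set.range fun g : G => l ∘ₗ τ g))]
  have : (Submodule.span ℂ (Set.range fun g : G => l ∘ₗ τ g)).dualCoannihilator = ⊥ := by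
    rw [eq_bot_iff]
    intro x hx
    rw [Submodule.mem_dualCoannihilator] at hx
    exact hl x fun y => hx _ (Submodule.subset_span ⟨y, rfl⟩)
  rw [this, Submodule.dualAnnihilator_bot]

lemma hp_comm (τ : Representation ℂ G X) (g h : G) (x : X) : τ g (τ h x) = τ h (τ g x) := by
  rw [← Module.End.mul_apply, ← map_mul, mul_comm, map_mul, Module.End.mul_apply]

/-- Every nonzero invariant subspace contains a joint eigenvector. -/
lemma hp_exists_eigen (τ : Representation ℂ G X) (n : ℕ) : ∀ N : Submodule ℂ X,
    GRep.Invariant τ N → N ≠ ⊥ → Module.finrank ℂ N ≤ n →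
    ∃ v ∈ N, v ≠ 0 ∧ ∃ c : G → ℂ, ∀ g, τ g v = c g • v := by
  induction n with
  | zero =>
    intro N _ hne hr
    exact absurd (Submodule.finrank_eq_zero.1 (Nat.le_zero.1 hr)) hne
  | succ n ih =>
    intro N hN hne hr
    by_cases hs : ∀ g, ∃ c : ℂ, ∀ v ∈ N, τ g v = c • v
    · choose c hc using hs
      obtain ⟨v, hv, hv0⟩ := N.ne_bot_iff.1 hne
      exact ⟨v, hv, hv0, c, fun g => hc g v hv⟩
    · push Not at hs
      obtain ⟨g, hg⟩ := hs
      have : Nontrivial N := Submodule.nontrivial_iff_ne_bot.2 hne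
      obtain ⟨c, hc⟩ := Module.End.exists_eigenvalue (GRep.sub τ hN g)
      obtain ⟨w, hw⟩ := hc.exists_hasEigenvector
      have hw1 : τ g (w : X) = c • (w : X) := by
        have := hw.apply_eq_smul
        exact congrArg Subtype.val this
      obtain ⟨v, hv, hvc⟩ := hg c
      have hlt : N ⊓ (Module.End.eigenspace (τ g) c) < N := by
        refine lt_of_le_of_ne inf_le_left fun he => hvc ?_
        have : v ∈ N ⊓ (Module.End.eigenspace (τ g) c) := by rw [he]; exact hv
        exact Module.End.mem_eigenspace_iff.1 this.2
      suffices h : ∃ v ∈ N ⊓ (Module.End.eigenspace (τ g) c), v ≠ 0 ∧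
          ∃ c : G → ℂ, ∀ g, τ g v = c g • v by
        obtain ⟨v', h1, h2⟩ := h
        exact ⟨v', h1.1, h2⟩
      refine ih (N ⊓ (Module.End.eigenspace (τ g) c)) ?_ ?_ ?_
      · rintro h x ⟨hx1, hx2⟩
        refine ⟨hN h x hx1, ?_⟩
        have hx3 := Module.End.mem_eigenspace_iff.1 hx2
        refine Module.End.mem_eigenspace_iff.2 ?_
        rw [hp_comm, hx3, map_smul]
      · rw [Submodule.ne_bot_iff]
        exact ⟨w, ⟨w.2, Module.End.mem_eigenspace_iff.2 hw1⟩,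
          fun h0 => hw.2 (Subtype.ext h0)⟩
      · have := Submodule.finrank_lt_finrank_of_lt hlt
        omega

end Helpers2

section Helpers2b

set_option linter.unusedSectionVars false

variable {K : Type*} [Field K] {X : Type*} [AddCommGroup X] [Module ℂ X] [Module.Finite ℂ X]

lemma hp_exists_sep (τ : Representation ℂ Kˣ X) (hcyc : TCyclic τ) : ∃ l, hpSep τ l := by
  have hind : iSupIndep fun χ : Kˣ → ℂ ↦ ⨅ i, Module.End.maxGenEigenspace (τ i) (χ i) := by
    apply Module.End.independent_iInf_maxGenEigenspace_of_forall_mapsTo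
    intro i j φ
    apply Module.End.mapsTo_maxGenEigenspace_of_comm
    exact LinearMap.ext fun x => hp_comm τ j i x
  let ι := {χ : Kˣ →* ℂˣ // tEigenT τ χ ≠ ⊥}
  have hex : ∀ i : ι, ∃ v ∈ tEigenT τ i.1, v ≠ 0 := fun i => (Submodule.ne_bot_iff _).1 i.2
  choose v hv hv0 using hex
  have hinj : Function.Injective (fun i : ι => fun g : Kˣ => ((i.1 g : ℂˣ) : ℂ)) := by
    intro i j h
    apply Subtype.ext
    ext g
    exact congrFun h g
  have hli : LinearIndependent ℂ v := by
    refine iSupIndep.linearIndependent _ (hind.comp hinj) (fun i => ?_) hv0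
    simp only [Function.comp_apply, Submodule.mem_iInf]
    intro g
    rw [Module.End.mem_maxGenEigenspace]
    refine ⟨1, ?_⟩
    rw [pow_one, LinearMap.sub_apply, hv i g]
    simp
  let b := Module.Basis.extend hli.linearIndepOn_id
  let l : Module.Dual ℂ X := b.constr ℂ (fun _ => (1 : ℂ))
  have hl : ∀ i, l (v i) = 1 := by
    intro i
    have hi : v i ∈ hli.linearIndepOn_id.extend (Set.subset_univ _) :=
      Module.Basis.subset_extend _ ⟨i, rfl⟩
    have h1 : b ⟨v i, hi⟩ = v i := Module.Basis.extend_apply_self _ _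
    rw [← h1]
    exact b.constr_basis ℂ _ _
  refine ⟨l, fun x hx => ?_⟩
  by_contra hx0
  let N : Submodule ℂ X := ⨅ y, LinearMap.ker (l ∘ₗ τ y)
  have hmem : ∀ z, z ∈ N ↔ ∀ y, l (τ y z) = 0 := by
    intro z
    simp [N]
  have hN : GRep.Invariant τ N := by
    intro g z hz
    rw [hmem] at hz ⊢
    intro y
    rw [← Module.End.mul_apply, ← map_mul]
    exact hz _
  have hNne : N ≠ ⊥ := (Submodule.ne_bot_iff _).2 ⟨x, (hmem x).2 hx, hx0⟩
  obtain ⟨w, hwN, hw0, c, hc⟩ := hp_exists_eigen τ _ N hN hNne le_rfl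
  let χ₀ : Kˣ →* ℂ :=
    { toFun := c
      map_one' := by
        have := hc 1
        rw [map_one, Module.End.one_apply] at this
        exact smul_left_injective ℂ hw0 (by simpa using this.symm)
      map_mul' := fun g h => by
        have := hc (g * h)
        rw [map_mul, Module.End.mul_apply, hc h, map_smul, hc g, smul_smul, mul_comm (c h)] at this
        exact smul_left_injective ℂ hw0 this.symm }
  let χ : Kˣ →* ℂˣ := χ₀.toHomUnits
  have hwχ : w ∈ tEigenT τ χ := fun u => hc u
  have hχ : tEigenT τ χ ≠ ⊥ := (Submodule.ne_bot_iff _).2 ⟨w, hwχ, hw0⟩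
  obtain ⟨a, ha⟩ := finrank_le_one_iff.1 (hcyc χ)
  obtain ⟨c1, h1⟩ := ha ⟨w, hwχ⟩
  obtain ⟨c2, h2⟩ := ha ⟨v ⟨χ, hχ⟩, hv _⟩
  have h1' : c1 • (a : X) = w := congrArg Subtype.val h1
  have h2' : c2 • (a : X) = v ⟨χ, hχ⟩ := congrArg Subtype.val h2
  have hlv := hl ⟨χ, hχ⟩
  rw [← h2', map_smul, smul_eq_mul] at hlv
  have hlw : l w = 0 := by simpa using (hmem w).1 hwN 1
  rw [← h1', map_smul, smul_eq_mul] at hlw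
  rcases mul_eq_zero.1 hlw with h | h
  · rw [h, zero_smul] at h1'
    exact hw0 h1'.symm
  · rw [h, mul_zero] at hlv
    exact zero_ne_one hlv

end Helpers2b


section Helpers3

set_option linter.unusedSectionVars false

open Aff Topology

variable {K : Type*} [NontriviallyNormedField K] [IsUltrametricDist K] [ProperSpace K]
variable {X : Type*} [AddCommGroup X] [Module ℂ X] [Module.Finite ℂ X]

lemma hp_orbit_lc (τ : Representation ℂ Kˣ X) (hτ : TIsSmooth τ) (x : X) :
    IsLocallyConstant (fun y : Kˣ => τ y x) := by
  rw [IsLocallyConstant.iff_eventually_eq]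
  intro y₀
  have h1 : Filter.Tendsto (fun y : Kˣ => y₀⁻¹ * y) (𝓝 y₀) (𝓝 1) := by
    have : Continuous (fun y : Kˣ => y₀⁻¹ * y) := by fun_prop
    simpa using this.tendsto y₀
  have h2 := h1.eventually ((hτ x).mem_nhds (by simp))
  filter_upwards [h2] with y hy
  have hy' : τ (y₀⁻¹ * y) x = x := hy
  conv_rhs => rw [← hy']
  rw [← Module.End.mul_apply, ← map_mul, mul_inv_cancel_left]

/-- The cut-off matrix coefficient. -/
def hpPhi (τ : Representation ℂ Kˣ X) (l : Module.Dual ℂ X) : X →ₗ[ℂ] (Kˣ → ℂ) where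
  toFun x y := if ‖(y : K)‖ ≤ 1 then l (τ y x) else 0
  map_add' a b := by
    funext y
    simp only [Pi.add_apply]
    split_ifs <;> simp
  map_smul' c a := by
    funext y
    simp

lemma hpPhi_apply (τ : Representation ℂ Kˣ X) (l : Module.Dual ℂ X) (x : X) (y : Kˣ) :
    hpPhi τ l x y = if ‖(y : K)‖ ≤ 1 then l (τ y x) else 0 := rfl

lemma hpPhi_mem_Cb (τ : Representation ℂ Kˣ X) (hτ : TIsSmooth τ) (l : Module.Dual ℂ X) (x : X) :
    hpPhi τ l x ∈ Cb K := by
  rw [hp_mem_Cb]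
  constructor
  · have h1 : IsLocallyConstant (fun y : Kˣ => l (τ y x)) := (hp_orbit_lc τ hτ x).comp l
    have hcl : IsClopen {y : Kˣ | (y : K) ∈ Metric.closedBall (0 : K) 1} :=
      (IsUltrametricDist.isClopen_closedBall (0 : K) one_ne_zero).preimage Units.continuous_val
    have h2 := (LocallyConstant.indicator ⟨_, h1⟩ hcl).isLocallyConstant
    convert h2 using 1
    funext y
    simp [hpPhi_apply, LocallyConstant.indicator, Set.indicator]
  · refine ⟨1, fun y hy => ?_⟩
    by_contra h
    exact hy (by rw [hpPhi_apply, if_neg h])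

lemma hpPhi_equiv (ψ : AddChar K ℂ) (τ : Representation ℂ Kˣ X) (hτ : TIsSmooth τ)
    (l : Module.Dual ℂ X) (u : Kˣ) (x : X) :
    repCx K ψ (xT u) (hpPhi τ l x) - hpPhi τ l (τ u x) ∈ SSx K := by
  have hu : 0 < ‖(u : K)‖ := norm_pos_iff.2 u.ne_zero
  refine hp_sub_mem_SSx (hp_Cb_xT ψ (hpPhi_mem_Cb τ hτ l x) u) (hpPhi_mem_Cb τ hτ l _)
    (min 1 (‖(u : K)‖)⁻¹) (by positivity) fun y hy => ?_
  have h1 : ‖(y : K)‖ ≤ 1 := hy.trans (min_le_left _ _)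
  have h2 : ‖(y : K)‖ * ‖(u : K)‖ ≤ 1 := by
    rw [← le_div_iff₀ hu, one_div]
    exact hy.trans (min_le_right _ _)
  have h3 : ‖((y * u : Kˣ) : K)‖ ≤ 1 := by simpa using h2
  rw [repCx_apply, hpPhi_apply, hpPhi_apply, xT_t, xT_s, if_pos h1, if_pos h3, map_mul τ]
  simp

lemma hp_exists_unit_small (a : ℝ) (ha : 0 < a) : ∃ y : Kˣ, ‖(y : K)‖ ≤ a := by
  obtain ⟨y, hy0, hy⟩ := NormedField.exists_norm_lt K ha
  exact ⟨Units.mk0 y (norm_pos_iff.1 hy0), hy.le⟩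

/-- Vectors whose matrix coefficient vanishes near zero. -/
def hpX (τ : Representation ℂ Kˣ X) (l : Module.Dual ℂ X) (r : ℝ) : Submodule ℂ X where
  carrier := {x | ∀ y : Kˣ, ‖(y : K)‖ ≤ r → l (τ y x) = 0}
  zero_mem' := by simp
  add_mem' ha hb y hy := by rw [map_add, map_add, ha y hy, hb y hy, add_zero]
  smul_mem' c x hx y hy := by rw [map_smul, map_smul, hx y hy, smul_zero]

lemma hpX_eq (τ : Representation ℂ Kˣ X) (l : Module.Dual ℂ X) (a b : Kˣ)
    (hab : ‖(a : K)‖ ≤ ‖(b : K)‖) : hpX τ l ‖(b : K)‖ = hpX τ l ‖(a : K)‖ := by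
  have hle : hpX τ l ‖(b : K)‖ ≤ hpX τ l ‖(a : K)‖ := fun x hx y hy => hx y (hy.trans hab)
  refine Submodule.eq_of_le_of_finrank_le hle ?_
  have hinj : Function.Injective (τ (a * b⁻¹)) := by
    intro x y h
    have := congrArg (τ (a * b⁻¹)⁻¹) h
    rwa [← Module.End.mul_apply, ← Module.End.mul_apply, ← map_mul, inv_mul_cancel, map_one]
      at this
  have hm : (hpX τ l ‖(a : K)‖).map (τ (a * b⁻¹)) ≤ hpX τ l ‖(b : K)‖ := by
    rintro _ ⟨x, hx, rfl⟩ y hy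
    rw [← Module.End.mul_apply, ← map_mul]
    refine hx _ ?_
    have hb : 0 < ‖(b : K)‖ := norm_pos_iff.2 b.ne_zero
    have hy2 : ‖(y : K)‖ / ‖(b : K)‖ ≤ 1 := (div_le_one hb).2 hy
    have : ‖((y * (a * b⁻¹) : Kˣ) : K)‖ = ‖(a : K)‖ * (‖(y : K)‖ / ‖(b : K)‖) := by
      simp
      ring
    rw [this]
    exact mul_le_of_le_one_right (norm_nonneg _) hy2
  rw [(Submodule.equivMapOfInjective _ hinj (hpX τ l ‖(a : K)‖)).finrank_eq]
  exact Submodule.finrank_mono hm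

lemma hpPhi_inj (τ : Representation ℂ Kˣ X) (l : Module.Dual ℂ X)
    (hl : hpSep τ l) (x : X) (hx : hpPhi τ l x ∈ SSx K) : x = 0 := by
  obtain ⟨a, ha, h⟩ := hp_SSx_vanish hx
  refine hl x fun y => ?_
  have hy : 0 < ‖(y : K)‖ := norm_pos_iff.2 y.ne_zero
  obtain ⟨z, hz⟩ := hp_exists_unit_small (K := K) (min (min 1 (a / 2)) ‖(y : K)‖) (by positivity)
  have hz1 : ‖(z : K)‖ ≤ ‖(y : K)‖ := hz.trans (min_le_right _ _)
  have hxz : x ∈ hpX τ l ‖(z : K)‖ := by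
    intro w hw
    have h1 : ‖(w : K)‖ ≤ 1 := hw.trans (hz.trans ((min_le_left _ _).trans (min_le_left _ _)))
    have h2 : ‖(w : K)‖ ≤ a / 2 :=
      hw.trans (hz.trans ((min_le_left _ _).trans (min_le_right _ _)))
    have := h w (by linarith)
    rwa [hpPhi_apply, if_pos h1] at this
  rw [← hpX_eq τ l z y hz1] at hxz
  exact hxz y le_rfl

/-- The submodule attached to a functional. -/
def hpM (τ : Representation ℂ Kˣ X) (l : Module.Dual ℂ X) : Submodule ℂ (Kˣ → ℂ) :=
  SSx K ⊔ LinearMap.range (hpPhi τ l)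

lemma hp_mem_M (τ : Representation ℂ Kˣ X) (l : Module.Dual ℂ X) (f : Kˣ → ℂ) :
    f ∈ hpM τ l ↔ ∃ x, f - hpPhi τ l x ∈ SSx K := by
  rw [hpM, Submodule.mem_sup]
  constructor
  · rintro ⟨s, hs, _, ⟨x, rfl⟩, rfl⟩
    exact ⟨x, by simpa using hs⟩
  · rintro ⟨x, hx⟩
    exact ⟨_, hx, _, ⟨x, rfl⟩, by simp⟩

lemma hpM_le_Cb (τ : Representation ℂ Kˣ X) (hτ : TIsSmooth τ) (l : Module.Dual ℂ X) :
    hpM τ l ≤ Cb K := by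
  refine sup_le hp_SSx_le_Cb ?_
  rintro _ ⟨x, rfl⟩
  exact hpPhi_mem_Cb τ hτ l x

lemma hp_SSx_le_M (τ : Representation ℂ Kˣ X) (l : Module.Dual ℂ X) : SSx K ≤ hpM τ l :=
  le_sup_left

lemma hpM_inv (ψ : AddChar K ℂ) (hψlc : IsLocallyConstant (⇑ψ))
    (τ : Representation ℂ Kˣ X) (hτ : TIsSmooth τ) (l : Module.Dual ℂ X) :
    GRep.Invariant (repCx K ψ) (hpM τ l) := by
  have hT : ∀ u f, f ∈ hpM τ l → repCx K ψ (xT u) f ∈ hpM τ l := by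
    intro u f hf
    obtain ⟨x, hx⟩ := (hp_mem_M τ l f).1 hf
    refine (hp_mem_M τ l _).2 ⟨τ u x, ?_⟩
    have h1 := SSx_invariant ψ hψlc (xT u) _ hx
    have h2 := (SSx K).add_mem h1 (hpPhi_equiv ψ τ hτ l u x)
    rw [map_sub, sub_add_sub_cancel] at h2
    exact h2
  have hS : ∀ b f, f ∈ hpM τ l → repCx K ψ (sS b) f ∈ hpM τ l := by
    intro b f hf
    have := (hpM τ l).add_mem (hp_SSx_le_M τ l
      (hp_Cb_sS ψ hψlc (hpM_le_Cb τ hτ l hf) b)) hf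
    rwa [sub_add_cancel] at this
  intro g f hf
  rw [aff_decomp g, map_mul, Module.End.mul_apply]
  exact hT _ _ (hS _ _ hf)

lemma hpM_ne_bot (τ : Representation ℂ Kˣ X) (l : Module.Dual ℂ X) : hpM τ l ≠ ⊥ := by
  intro h
  have := hp_SSx_le_M τ l
  rw [h, le_bot_iff] at this
  exact hp_SSx_ne_bot this

lemma hpM_iso (ψ : AddChar K ℂ) (hψlc : IsLocallyConstant (⇑ψ)) (hψne : ψ ≠ 1)
    (τ : Representation ℂ Kˣ X) (hτ : TIsSmooth τ) (l : Module.Dual ℂ X) (hl : hpSep τ l)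
    (hM : GRep.Invariant (repCx K ψ) (hpM τ l)) :
    GRep.Iso (piZeroT (GRep.sub (repCx K ψ) hM)) τ := by
  have hco := hp_coinv ψ hψlc hψne hM (hpM_le_Cb τ hτ l) (hpM_ne_bot τ l)
  have hmem : ∀ x, hpPhi τ l x ∈ hpM τ l := fun x => le_sup_right (a := SSx K) ⟨x, rfl⟩
  let F : X →ₗ[ℂ] (↥(hpM τ l) ⧸ sCoinvKer (GRep.sub (repCx K ψ) hM)) :=
    (Submodule.mkQ _).comp ((hpPhi τ l).codRestrict (hpM τ l) hmem)
  have hF : ∀ x, F x = Submodule.Quotient.mk ⟨hpPhi τ l x, hmem x⟩ := fun x => rfl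
  have hinj : Function.Injective F := by
    rw [injective_iff_map_eq_zero]
    intro x hx
    rw [hF, Submodule.Quotient.mk_eq_zero, hco] at hx
    exact hpPhi_inj τ l hl x hx
  have hsurj : Function.Surjective F := by
    intro q
    obtain ⟨f, rfl⟩ := Submodule.Quotient.mk_surjective _ q
    obtain ⟨x, hx⟩ := (hp_mem_M τ l f.1).1 f.2
    refine ⟨x, ?_⟩
    rw [hF, eq_comm, Submodule.Quotient.eq, hco]
    exact hx
  have hequiv : ∀ (u : Kˣ) x, piZeroT (GRep.sub (repCx K ψ) hM) u (F x) = F (τ u x) := by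
    intro u x
    rw [hF, hF]
    change Submodule.Quotient.mk _ = _
    rw [Submodule.Quotient.eq, hco]
    exact hpPhi_equiv ψ τ hτ l u x
  let e := LinearEquiv.ofBijective F ⟨hinj, hsurj⟩
  refine ⟨e.symm, fun g v => ?_⟩
  rw [LinearEquiv.symm_apply_eq]
  change _ = F _
  rw [← hequiv]
  congr 1
  exact (e.apply_symm_apply v).symm

lemma hpM_le (τ : Representation ℂ Kˣ X)
    (l l' : Module.Dual ℂ X) (hl : hpSep τ l) : hpM τ l' ≤ hpM τ l := by
  refine sup_le (hp_SSx_le_M τ l) ?_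
  rintro _ ⟨x, rfl⟩
  have hmem : l' ∈ Submodule.span ℂ (Set.range fun g : Kˣ => l ∘ₗ τ g) := by
    rw [hpSep_span τ l hl]
    trivial
  refine le_sup_right (a := SSx K) ?_
  induction hmem using Submodule.span_induction with
  | mem m hm =>
    obtain ⟨g, rfl⟩ := hm
    refine ⟨τ g x, ?_⟩
    funext y
    rw [hpPhi_apply, hpPhi_apply, LinearMap.comp_apply, hp_comm]
  | zero =>
    convert Submodule.zero_mem (LinearMap.range (hpPhi τ l)) using 1
    funext y
    simp [hpPhi_apply]
  | add a b _ _ ha hb =>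
    convert Submodule.add_mem _ ha hb using 1
    funext y
    rw [Pi.add_apply, hpPhi_apply, hpPhi_apply, hpPhi_apply]
    split_ifs <;> simp
  | smul c a _ ha =>
    convert Submodule.smul_mem _ c ha using 1
    funext y
    simp [hpPhi_apply]

end Helpers3


section Helpers4

set_option linter.unusedSectionVars false

open Aff Topology

variable {K : Type*} [NontriviallyNormedField K] [IsUltrametricDist K] [ProperSpace K]
variable {X : Type*} [AddCommGroup X] [Module ℂ X] [Module.Finite ℂ X]

lemma hp_subquot_iso {G V W : Type*} [Group G] [AddCommGroup V] [Module ℂ V]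
    [AddCommGroup W] [Module ℂ W] (ρ : Representation ℂ G V) (σ : Representation ℂ G W)
    {A B : Submodule ℂ V} (hA : GRep.Invariant ρ A) (hB : GRep.Invariant ρ B)
    (F : B →ₗ[ℂ] W) (hF : ∀ v : B, F v = 0 ↔ (v : V) ∈ A) (hs : Function.Surjective F)
    (he : ∀ g v, F (GRep.sub ρ hB g v) = σ g (F v)) :
    GRep.Iso (GRep.subquot ρ hA hB) σ := by
  have hker : A.comap B.subtype ≤ LinearMap.ker F := fun v hv => (hF v).2 hv
  refine ⟨LinearEquiv.ofBijective (Submodule.liftQ (A.comap B.subtype) F hker) ⟨?_, ?_⟩, ?_⟩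
  · rw [injective_iff_map_eq_zero]
    intro q hq
    obtain ⟨v, rfl⟩ := Submodule.Quotient.mk_surjective _ q
    rw [Submodule.Quotient.mk_eq_zero]
    exact (hF v).1 hq
  · intro w
    obtain ⟨v, rfl⟩ := hs w
    exact ⟨Submodule.Quotient.mk v, rfl⟩
  · intro g q
    obtain ⟨v, rfl⟩ := Submodule.Quotient.mk_surjective _ q
    exact he g v

lemma hp_chain {V : Type*} [AddCommGroup V] [Module ℂ V] (ρ : Rep K V) (d : ℕ) :
    ∀ A : Submodule ℂ V, GRep.Invariant ρ A → Module.Finite ℂ (V ⧸ A) →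
    Module.finrank ℂ (V ⧸ A) ≤ d →
    ∃ (n : ℕ) (W : ℕ → Submodule ℂ V), W 0 = A ∧ W n = ⊤ ∧ (∀ i, GRep.Invariant ρ (W i)) ∧
      (∀ i < n, W i < W (i + 1)) ∧ (∀ i, A ≤ W i) ∧
      ∀ i < n, ∀ C : Submodule ℂ V, GRep.Invariant ρ C → W i ≤ C → C ≤ W (i + 1) →
        C = W i ∨ C = W (i + 1) := by
  induction d with
  | zero =>
    intro A hA hfin hr
    have : Subsingleton (V ⧸ A) := Module.finrank_zero_iff.1 (Nat.le_zero.1 hr)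
    exact ⟨0, fun _ => A, rfl, Submodule.Quotient.subsingleton_iff.1 this, fun _ => hA,
      by simp, fun _ => le_rfl, by simp⟩
  | succ d ih =>
    intro A hA hfin hr
    by_cases hAt : A = ⊤
    · exact ⟨0, fun _ => A, rfl, hAt, fun _ => hA, by simp, fun _ => le_rfl, by simp⟩
    · let S : Set (Submodule ℂ V) := {B | GRep.Invariant ρ B ∧ A < B}
      have hS : S.Nonempty := ⟨⊤, fun _ _ _ => trivial, lt_top_iff_ne_top.2 hAt⟩
      let r : Submodule ℂ V → ℕ := fun B => Module.finrank ℂ (B.map A.mkQ)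
      let B := Function.argminOn r S hS
      have hB : B ∈ S := Function.argminOn_mem r S hS
      have hmin : ∀ C ∈ S, r B ≤ r C := fun C hC => Function.argminOn_le r S hC
      have hcm : ∀ C : Submodule ℂ V, A ≤ C → (C.map A.mkQ).comap A.mkQ = C := by
        intro C hC
        rw [Submodule.comap_map_mkQ, sup_eq_right]
        exact hC
      have hfinB : Module.Finite ℂ (V ⧸ B) :=
        Module.Finite.of_surjective (Submodule.factor hB.2.le) (Submodule.factor_surjective hB.2.le)
      have hrB : Module.finrank ℂ (V ⧸ B) ≤ d := by
        have e := (Submodule.quotientQuotientEquivQuotient A B hB.2.le).finrank_eq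
        have e2 := Submodule.finrank_quotient_add_finrank (B.map A.mkQ)
        have : 0 < Module.finrank ℂ (B.map A.mkQ) := by
          rw [Nat.pos_iff_ne_zero]
          intro h0
          have h1 := Submodule.finrank_eq_zero.1 h0
          have h2 := hcm B hB.2.le
          rw [h1, Submodule.comap_bot, Submodule.ker_mkQ] at h2
          exact hB.2.ne h2
        omega
      obtain ⟨n, W, h0, h1, h2, h3, h4, h5⟩ := ih B hB.1 hfinB hrB
      refine ⟨n + 1, fun i => Nat.casesOn i A W, rfl, h1, ?_, ?_, ?_, ?_⟩
      · rintro (_ | i)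
        · exact hA
        · exact h2 i
      · rintro (_ | i) hi
        · change A < W 0
          rw [h0]
          exact hB.2
        · exact h3 i (by omega)
      · rintro (_ | i)
        · exact le_rfl
        · exact hB.2.le.trans (h4 i)
      · rintro (_ | i) hi C hC hC1 hC2
        · change A ≤ C at hC1
          change C ≤ W 0 at hC2
          change C = A ∨ C = W 0
          rw [h0] at hC2 ⊢
          by_cases hCA : C = A
          · exact Or.inl hCA
          · right
            have hCS : C ∈ S := ⟨hC, lt_of_le_of_ne hC1 (Ne.symm hCA)⟩
            have := Submodule.eq_of_le_of_finrank_le (Submodule.map_mono (f := A.mkQ) hC2)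
              (hmin C hCS)
            rw [← hcm C hC1, this, hcm B hB.2.le]
        · exact h5 i (by omega) C hC hC1 hC2

lemma hpM_series (ψ : AddChar K ℂ) (hψlc : IsLocallyConstant (⇑ψ)) (hψne : ψ ≠ 1)
    (M : Submodule ℂ (Kˣ → ℂ)) (hM : GRep.Invariant (repCx K ψ) M) (hMC : M ≤ Cb K)
    (hSM : SSx K ≤ M) (hfin : Module.Finite ℂ (↥M ⧸ (SSx K).comap M.subtype)) :
    ∃ c : CompSeries (GRep.sub (repCx K ψ) hM), c.deg (SRep ψ hψlc) = 1 := by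
  let ρ := GRep.sub (repCx K ψ) hM
  let A : Submodule ℂ M := (SSx K).comap M.subtype
  have hA : GRep.Invariant ρ A := fun g v hv => SSx_invariant ψ hψlc g v.1 hv
  have hmapA : A.map M.subtype = SSx K := by
    rw [Submodule.map_comap_subtype, inf_eq_right]
    exact hSM
  have hAne : A ≠ ⊥ := by
    intro h
    rw [h, Submodule.map_bot] at hmapA
    exact hp_SSx_ne_bot hmapA.symm
  obtain ⟨n, W, h0, h1, h2, h3, h4, h5⟩ := hp_chain ρ _ A hA hfin le_rfl
  let c : CompSeries ρ :=
    { n := n + 1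
      W := fun i => Nat.casesOn i ⊥ W
      bot := rfl
      top := h1
      inv := by
        rintro (_ | i)
        · intro g v hv
          change v ∈ (⊥ : Submodule ℂ M) at hv
          rw [Submodule.mem_bot] at hv
          rw [hv, map_zero]
          exact Submodule.zero_mem _
        · exact h2 i
      lt := by
        rintro (_ | i) hi
        · change ⊥ < W 0
          rw [h0]
          exact bot_lt_iff_ne_bot.2 hAne
        · exact h3 i (by omega)
      maximal := by
        rintro (_ | i) hi C hC hC1 hC2
        · change C ≤ W 0 at hC2
          change C = ⊥ ∨ C = W 0
          rw [h0] at hC2 ⊢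
          by_cases hCb : C = ⊥
          · exact Or.inl hCb
          · right
            refine le_antisymm hC2 ?_
            have hinv : GRep.Invariant (repCx K ψ) (C.map M.subtype) :=
              GRep.map_invariant ρ _ M.subtype (fun g v => rfl) _ hC
            have hle : C.map M.subtype ≤ Cb K := by
              rintro _ ⟨v, -, rfl⟩
              exact hMC v.2
            have hne : C.map M.subtype ≠ ⊥ := by
              intro h
              exact hCb (Submodule.map_injective_of_injective M.injective_subtype
                (h.trans (Submodule.map_bot _).symm))
            intro v hv
            obtain ⟨w, hw, hwv⟩ := hp_SSx_le ψ hψlc hψne hinv hle hne hv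
            rwa [← Subtype.ext hwv]
        · exact h5 i (by omega) C hC hC1 hC2 }
  refine ⟨c, ?_⟩
  unfold CompSeries.deg
  rw [Finset.card_eq_one]
  refine ⟨⟨0, Nat.succ_pos n⟩, ?_⟩
  ext ⟨i, hi⟩
  simp only [Finset.mem_filter, Finset.mem_univ, true_and, Finset.mem_singleton, Fin.mk.injEq]
  constructor
  · rcases i with _ | i
    · intro _; rfl
    · rintro ⟨e, he⟩
      exfalso
      obtain ⟨f, hf, hf0⟩ := (Submodule.ne_bot_iff _).1 (hp_SSx_ne_bot (K := K))
      obtain ⟨x, hx⟩ := Function.ne_iff.1 hf0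
      obtain ⟨b, hb⟩ := hp_sep ψ hψne x.ne_zero
      obtain ⟨q, hq⟩ := e.surjective ⟨f, hf⟩
      have hq1 := he (sS b) q
      rw [hq] at hq1
      have hq2 : GRep.subquot ρ (c.inv (i + 1)) (c.inv (i + 1 + 1)) (sS b) q = q := by
        obtain ⟨v, rfl⟩ := Submodule.Quotient.mk_surjective _ q
        change Submodule.Quotient.mk _ = _
        rw [Submodule.Quotient.eq]
        change _ ∈ W i
        refine h4 i ?_
        exact hp_Cb_sS ψ hψlc (hMC v.1.2) b
      rw [hq2, hq] at hq1
      have := congrFun (congrArg Subtype.val hq1) x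
      change f x = ψ (b * x) * f (x * 1) at this
      rw [mul_one] at this
      have h6 : ψ (b * x) = 1 := mul_right_cancel₀ hx (by rw [← this, one_mul])
      apply hb
      rw [h6, mul_zero, AddChar.map_zero_eq_one]
  · rintro rfl
    have hW1 : c.W (0 + 1) = A := h0
    have hle : ∀ v : c.W (0 + 1), ((v : M) : Kˣ → ℂ) ∈ SSx K := by
      intro v
      have : (v : M) ∈ A := by rw [← hW1]; exact v.2
      exact this
    let F : c.W (0 + 1) →ₗ[ℂ] SSx K :=
      (M.subtype.comp (c.W (0 + 1)).subtype).codRestrict (SSx K) hle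
    refine hp_subquot_iso ρ (SRep ψ hψlc) (c.inv 0) (c.inv (0 + 1)) F ?_ ?_ ?_
    · intro v
      have hb : c.W 0 = ⊥ := c.bot
      rw [hb, Submodule.mem_bot]
      constructor
      · intro h
        have h7 : ((F v : SSx K) : Kˣ → ℂ) = 0 := by rw [h]; rfl
        exact Subtype.ext h7
      · intro h
        have h7 : ((v : M) : Kˣ → ℂ) = 0 := by rw [h]; rfl
        exact Subtype.ext h7
    · intro f
      have hf : (⟨f.1, hSM f.2⟩ : M) ∈ c.W (0 + 1) := by
        rw [hW1]
        exact f.2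
      exact ⟨⟨⟨f.1, hSM f.2⟩, hf⟩, Subtype.ext rfl⟩
    · intro g v
      exact Subtype.ext rfl

end Helpers4


section Helpers5

set_option linter.unusedSectionVars false

open Aff Topology

variable {K : Type*} [NontriviallyNormedField K] [IsUltrametricDist K] [ProperSpace K]
variable {X : Type*} [AddCommGroup X] [Module ℂ X] [Module.Finite ℂ X]

/-- Equivariance of `J` under `u` on the ball of radius `a`. -/
def hpEq (τ : Representation ℂ Kˣ X) (J : X →ₗ[ℂ] (Kˣ → ℂ)) (a : ℝ) (u : Kˣ) : Prop :=
  ∀ y : Kˣ, ‖(y : K)‖ ≤ a → ∀ x, J (τ u x) y = J x (y * u)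

lemma hpEq.mono {τ : Representation ℂ Kˣ X} {J : X →ₗ[ℂ] (Kˣ → ℂ)} {a b : ℝ} {u : Kˣ}
    (h : hpEq τ J a u) (hb : b ≤ a) : hpEq τ J b u := fun y hy x => h y (hy.trans hb) x

lemma hpEq.mul {τ : Representation ℂ Kˣ X} {J : X →ₗ[ℂ] (Kˣ → ℂ)} {a b : ℝ} {u v : Kˣ}
    (h : hpEq τ J a u) (h' : hpEq τ J b v) : hpEq τ J (min a (b / ‖(u : K)‖)) (u * v) := by
  intro y hy x
  have hu : 0 < ‖(u : K)‖ := norm_pos_iff.2 u.ne_zero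
  rw [map_mul, Module.End.mul_apply, h y (hy.trans (min_le_left _ _)), h' (y * u), mul_assoc]
  have := hy.trans (min_le_right _ _)
  rw [le_div_iff₀ hu] at this
  simpa using this

lemma hp_lift (ψ : AddChar K ℂ) (τ : Representation ℂ Kˣ X) (hτ : TIsSmooth τ)
    (J : X →ₗ[ℂ] (Kˣ → ℂ)) (hJ : ∀ x, J x ∈ Cb K)
    (hJe : ∀ u x, repCx K ψ (xT u) (J x) - J (τ u x) ∈ SSx K) :
    ∃ l : Module.Dual ℂ X, ∀ x, J x - hpPhi τ l x ∈ SSx K := by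
  have hex : ∀ u, ∃ a : ℝ, 0 < a ∧ hpEq τ J a u := by
    intro u
    let B := Module.finBasis ℂ X
    have h1 : ∀ i, ∃ a : ℝ, 0 < a ∧ ∀ y : Kˣ, ‖(y : K)‖ < a → J (τ u (B i)) y = J (B i) (y * u) := by
      intro i
      obtain ⟨a, ha, h⟩ := hp_SSx_vanish (hJe u (B i))
      refine ⟨a, ha, fun y hy => ?_⟩
      have := h y hy
      rw [Pi.sub_apply, sub_eq_zero] at this
      rw [← this]
      simp
    choose a ha h using h1
    have h2 : ∃ b : ℝ, 0 < b ∧ ∀ i, b < a i := by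
      have := (Filter.eventually_all (l := 𝓝[>] (0 : ℝ))).2
        (fun i => (eventually_nhdsWithin_of_eventually_nhds (eventually_lt_nhds (ha i))))
      obtain ⟨b, hb1, hb2⟩ := (this.and self_mem_nhdsWithin).exists
      exact ⟨b, hb2, hb1⟩
    obtain ⟨b, hb, hba⟩ := h2
    refine ⟨b, hb, fun y hy x => ?_⟩
    have : (LinearMap.proj y ∘ₗ J ∘ₗ τ u : X →ₗ[ℂ] ℂ) = LinearMap.proj (y * u) ∘ₗ J := by
      refine B.ext fun i => ?_
      exact h i y (hy.trans_lt (hba i))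
    exact LinearMap.congr_fun this x
  have hcl : ∀ n : ℕ, IsClosed {u : Kˣ | hpEq τ J (1 / ((n : ℝ) + 1)) u} := by
    intro n
    have : {u : Kˣ | hpEq τ J (1 / ((n : ℝ) + 1)) u} =
        ⋂ y : Kˣ, ⋂ (_ : ‖(y : K)‖ ≤ 1 / ((n : ℝ) + 1)), ⋂ x : X,
          {u : Kˣ | J (τ u x) y - J x (y * u) = 0} := by
      ext u
      simp [hpEq, sub_eq_zero]
    rw [this]
    refine isClosed_iInter fun y => isClosed_iInter fun _ => isClosed_iInter fun x => ?_
    have h1 : IsLocallyConstant (fun u : Kˣ => J (τ u x) y) :=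
      (hp_orbit_lc τ hτ x).comp (fun z => J z y)
    have h2 : IsLocallyConstant (fun u : Kˣ => J x (y * u)) :=
      (hJ x).1.comp_continuous (f := fun u : Kˣ => y * u) (by fun_prop)
    exact (h1.sub h2).isClosed_fiber 0
  have hun : ⋃ n : ℕ, {u : Kˣ | hpEq τ J (1 / ((n : ℝ) + 1)) u} = Set.univ := by
    rw [Set.eq_univ_iff_forall]
    intro u
    obtain ⟨a, ha, h⟩ := hex u
    obtain ⟨n, hn⟩ := exists_nat_one_div_lt ha
    exact Set.mem_iUnion.2 ⟨n, h.mono hn.le⟩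
  obtain ⟨n, u₀, hu₀⟩ := nonempty_interior_of_iUnion_of_closed hcl hun
  obtain ⟨a₀, ha₀, hinv⟩ := hex u₀⁻¹
  have hn0 : (0 : ℝ) < 1 / ((n : ℝ) + 1) := by positivity
  obtain ⟨V, hV1, b, hb, hVb⟩ : ∃ V ∈ 𝓝 (1 : Kˣ), ∃ b : ℝ, 0 < b ∧ ∀ v ∈ V, hpEq τ J b v := by
    refine ⟨(fun v => u₀ * v) ⁻¹' (interior {u : Kˣ | hpEq τ J (1 / ((n : ℝ) + 1)) u}), ?_,
      min a₀ ((1 / ((n : ℝ) + 1)) / ‖((u₀⁻¹ : Kˣ) : K)‖), ?_, ?_⟩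
    · refine (isOpen_interior.preimage (by fun_prop)).mem_nhds ?_
      simpa using hu₀
    · have : 0 < ‖((u₀⁻¹ : Kˣ) : K)‖ := norm_pos_iff.2 (Units.ne_zero _)
      positivity
    · intro v hv
      have h1 : hpEq τ J (1 / ((n : ℝ) + 1)) (u₀ * v) := interior_subset hv
      have := hinv.mul h1
      rwa [inv_mul_cancel_left] at this
  obtain ⟨c', hc'0, hc'1⟩ := NormedField.exists_norm_lt_one K
  obtain ⟨c, hc⟩ : ∃ c : Kˣ, (c : K) = c' := ⟨Units.mk0 c' (norm_pos_iff.1 hc'0), rfl⟩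
  rw [← hc] at hc'0 hc'1
  obtain ⟨a, ha, hC⟩ : ∃ a : ℝ, 0 < a ∧
      ∀ u ∈ {u : Kˣ | ‖(c : K)‖ ≤ ‖(u : K)‖ ∧ ‖(u : K)‖ ≤ 1}, hpEq τ J a u := by
    refine (hp_compact_annulus ‖(c : K)‖ 1 hc'0).induction_on
      (p := fun s => ∃ a : ℝ, 0 < a ∧ ∀ u ∈ s, hpEq τ J a u) ?_ ?_ ?_ ?_
    · exact ⟨1, one_pos, by simp⟩
    · rintro s t hst ⟨a, ha, h⟩
      exact ⟨a, ha, fun u hu => h u (hst hu)⟩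
    · rintro s t ⟨a, ha, h⟩ ⟨a', ha', h'⟩
      refine ⟨min a a', lt_min ha ha', ?_⟩
      rintro u (hu | hu)
      · exact (h u hu).mono (min_le_left _ _)
      · exact (h' u hu).mono (min_le_right _ _)
    · intro u _
      obtain ⟨a, ha, h⟩ := hex u
      have hu : 0 < ‖(u : K)‖ := norm_pos_iff.2 u.ne_zero
      refine ⟨(fun v => u⁻¹ * v) ⁻¹' V, mem_nhdsWithin_of_mem_nhds ?_,
        min a (b / ‖(u : K)‖), by positivity, ?_⟩
      · have : Continuous (fun v : Kˣ => u⁻¹ * v) := by fun_prop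
        refine this.continuousAt.preimage_mem_nhds ?_
        simpa using hV1
      · intro v hv
        have := h.mul (hVb _ hv)
        rwa [mul_inv_cancel_left] at this
  have hall : ∀ m : ℕ, ∀ u : Kˣ, ‖(c : K)‖ ^ (m + 1) ≤ ‖(u : K)‖ → ‖(u : K)‖ ≤ 1 →
      hpEq τ J a u := by
    intro m
    induction m with
    | zero =>
      intro u h1 h2
      exact hC u ⟨by simpa using h1, h2⟩
    | succ m ih =>
      intro u h1 h2
      by_cases h3 : ‖(c : K)‖ ≤ ‖(u : K)‖
      · exact hC u ⟨h3, h2⟩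
      · have hnorm : ‖((c⁻¹ * u : Kˣ) : K)‖ = ‖(u : K)‖ / ‖(c : K)‖ := by
          simp
          ring
        have h4 : hpEq τ J a (c⁻¹ * u) := by
          refine ih _ ?_ ?_
          · rw [hnorm, le_div_iff₀ hc'0, ← pow_succ]
            exact h1
          · rw [hnorm, div_le_one hc'0]
            exact (not_le.1 h3).le
        have h5 := (hC c ⟨le_rfl, hc'1.le⟩).mul h4
        rw [mul_inv_cancel_left] at h5
        refine h5.mono (le_min le_rfl ?_)
        rw [le_div_iff₀ hc'0]
        exact mul_le_of_le_one_right ha.le hc'1.le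
  have hall' : ∀ u : Kˣ, ‖(u : K)‖ ≤ 1 → hpEq τ J a u := by
    intro u hu
    obtain ⟨m, hm⟩ := exists_pow_lt_of_lt_one (norm_pos_iff.2 u.ne_zero) hc'1
    refine hall m u ?_ hu
    refine le_trans ?_ hm.le
    exact pow_le_pow_of_le_one hc'0.le hc'1.le (Nat.le_succ m)
  obtain ⟨y₀, hy₀⟩ := hp_exists_unit_small (K := K) a ha
  have hy₀0 : 0 < ‖(y₀ : K)‖ := norm_pos_iff.2 y₀.ne_zero
  refine ⟨LinearMap.proj y₀ ∘ₗ J ∘ₗ τ y₀⁻¹, fun x => ?_⟩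
  refine hp_sub_mem_SSx (hJ x) (hpPhi_mem_Cb τ hτ _ x) (min 1 ‖(y₀ : K)‖) (by positivity)
    fun y hy => ?_
  have h1 : ‖(y : K)‖ ≤ 1 := hy.trans (min_le_left _ _)
  rw [hpPhi_apply, if_pos h1]
  change J x y = J (τ y₀⁻¹ (τ y x)) y₀
  rw [← Module.End.mul_apply, ← map_mul, hall' _ _ y₀ hy₀, mul_inv_cancel_left]
  have : ‖((y₀⁻¹ * y : Kˣ) : K)‖ = ‖(y : K)‖ / ‖(y₀ : K)‖ := by
    simp
    ring
  rw [this, div_le_one hy₀0]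
  exact hy.trans (min_le_right _ _)

lemma hp_unique (ψ : AddChar K ℂ) (hψlc : IsLocallyConstant (⇑ψ)) (hψne : ψ ≠ 1)
    (τ : Representation ℂ Kˣ X) (hτ : TIsSmooth τ)
    (M : Submodule ℂ (Kˣ → ℂ)) (hM : GRep.Invariant (repCx K ψ) M) (hMC : M ≤ Cb K)
    (hne : M ≠ ⊥) (hiso : GRep.Iso (piZeroT (GRep.sub (repCx K ψ) hM)) τ) :
    ∃ l, hpSep τ l ∧ M = hpM τ l := by
  have hco := hp_coinv ψ hψlc hψne hM hMC hne
  have hSM := hp_SSx_le ψ hψlc hψne hM hMC hne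
  obtain ⟨e, he⟩ := hiso
  obtain ⟨s, hs⟩ := (sCoinvKer (GRep.sub (repCx K ψ) hM)).mkQ.exists_rightInverse_of_surjective
    (Submodule.range_mkQ _)
  let J₀ : X →ₗ[ℂ] M := s ∘ₗ e.symm.toLinearMap
  have hJ₀ : ∀ x, Submodule.Quotient.mk (J₀ x) = e.symm x := fun x =>
    LinearMap.congr_fun hs (e.symm x)
  let J : X →ₗ[ℂ] (Kˣ → ℂ) := M.subtype ∘ₗ J₀
  have hJe : ∀ u x, repCx K ψ (xT u) (J x) - J (τ u x) ∈ SSx K := by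
    intro u x
    have h1 : GRep.sub (repCx K ψ) hM (xT u) (J₀ x) - J₀ (τ u x) ∈
        sCoinvKer (GRep.sub (repCx K ψ) hM) := by
      rw [← Submodule.Quotient.eq, hJ₀, LinearEquiv.eq_symm_apply]
      have h2 := he u (e.symm x)
      rw [e.apply_symm_apply] at h2
      rw [← h2, ← hJ₀]
      rfl
    rw [hco] at h1
    exact h1
  obtain ⟨l, hl⟩ := hp_lift ψ τ hτ J (fun x => hMC (J₀ x).2) hJe
  refine ⟨l, ?_, ?_⟩
  · intro x hx
    have h0 : hpPhi τ l x = 0 := by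
      funext y
      simp [hpPhi_apply, hx y]
    have h1 := hl x
    rw [h0, sub_zero] at h1
    have h2 : J₀ x ∈ sCoinvKer (GRep.sub (repCx K ψ) hM) := by
      rw [hco]
      exact h1
    rw [← Submodule.Quotient.mk_eq_zero, hJ₀] at h2
    simpa using h2
  · apply le_antisymm
    · intro f hf
      rw [hp_mem_M]
      refine ⟨e (Submodule.Quotient.mk ⟨f, hf⟩), ?_⟩
      have h1 : (⟨f, hf⟩ : M) - J₀ (e (Submodule.Quotient.mk ⟨f, hf⟩)) ∈
          sCoinvKer (GRep.sub (repCx K ψ) hM) := by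
        rw [← Submodule.Quotient.eq, hJ₀, e.symm_apply_apply]
      have h1b := hco.le h1
      have h2 := (SSx K).add_mem h1b (hl (e (Submodule.Quotient.mk ⟨f, hf⟩)))
      have h3 : f - hpPhi τ l (e (Submodule.Quotient.mk ⟨f, hf⟩)) =
        (f - J (e (Submodule.Quotient.mk ⟨f, hf⟩))) + (J (e (Submodule.Quotient.mk ⟨f, hf⟩)) -
          hpPhi τ l (e (Submodule.Quotient.mk ⟨f, hf⟩))) := (sub_add_sub_cancel _ _ _).symm
      rw [h3]
      exact h2
    · intro f hf
      obtain ⟨x, hx⟩ := (hp_mem_M τ l f).1 hf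
      have h1 := M.sub_mem (hSM hx) (hSM (hl x))
      have h2 := M.add_mem h1 (J₀ x).2
      convert h2 using 1
      change f = f - hpPhi τ l x - (J x - hpPhi τ l x) + J x
      abel

end Helpers5

section Statements

open Aff

variable {K : Type*} [NontriviallyNormedField K] [IsUltrametricDist K] [ProperSpace K]

theorem statement10
    (hchar : (2 : K) ≠ 0)
    (ψ : AddChar K ℂ) (hψlc : IsLocallyConstant (⇑ψ)) (hψne : ψ ≠ 1)
    {X : Type*} [AddCommGroup X] [Module ℂ X] [Module.Finite ℂ X]
    (τ : Representation ℂ Kˣ X) (hτ : TIsSmooth τ) (hcyc : TCyclic τ) :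
    ∃! M : Submodule ℂ (Kˣ → ℂ),
      ∃ hM : GRep.Invariant (repCx K ψ) M, M ≤ Cb K ∧
        (∃ c : CompSeries (GRep.sub (repCx K ψ) hM), c.deg (SRep ψ hψlc) = 1) ∧
        GRep.Iso (piZeroT (GRep.sub (repCx K ψ) hM)) τ := by
  obtain ⟨l, hl⟩ := hp_exists_sep τ hcyc
  have hM := hpM_inv ψ hψlc τ hτ l
  have hiso := hpM_iso ψ hψlc hψne τ hτ l hl hM
  refine ⟨hpM τ l, ⟨hM, hpM_le_Cb τ hτ l, ?_, hiso⟩, ?_⟩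
  · refine hpM_series ψ hψlc hψne _ hM (hpM_le_Cb τ hτ l) (hp_SSx_le_M τ l) ?_
    rw [← hp_coinv ψ hψlc hψne hM (hpM_le_Cb τ hτ l) (hpM_ne_bot τ l)]
    obtain ⟨e, -⟩ := hiso
    exact Module.Finite.equiv e.symm
  · rintro M ⟨hM', hMC, ⟨c, hc⟩, hiso'⟩
    have hne : M ≠ ⊥ := by
      intro h
      have hsub : Subsingleton M := by rw [h]; infer_instance
      have hn : c.n = 0 := by
        by_contra h0
        exact (c.lt 0 (Nat.pos_of_ne_zero h0)).ne (Subsingleton.elim _ _)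
      have h1 : c.deg (SRep ψ hψlc) ≤ c.n := by
        unfold CompSeries.deg
        exact (Finset.card_le_univ _).trans (by simp)
      omega
    obtain ⟨l', hl', rfl⟩ := hp_unique ψ hψlc hψne τ hτ M hM' hMC hne hiso'
    exact le_antisymm (hpM_le τ l l' hl) (hpM_le τ l' l hl')

end Statements

end PSW
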